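/- Let (X_1,d_1),…,(X_q,d_q),(Z_1,D_1),…,(Z_Q,D_Q) be smooth vector fields on a neighborhood Ω of 0 in ℝ^n, each paired with a ν-parameter degree, and suppose there exist ξ_1 > 0 and a neighborhood U ⊆ Ω of 0 such that (𝐗,𝐝) := {(X_1,d_1),…,(X_q,d_q)} satisfies 𝒞(x,ξ⃗_1,Ω) for every x ∈ U. If (𝐗,𝐝) controls every element of {([X_i,X_j], d_i+d_j) : 1 ≤ i,j ≤ q} and every element of (𝐙,𝐃) := {(Z_1,D_1),…,(Z_Q,D_Q)}, on U with parameter ξ_1, then there exists c > 0 such that B_{(𝐙,𝐃)}(x, cξ_1δ) ⊆ B_{(𝐗,𝐝)}(x, ξ_1δ) for every x ∈ U and δ ∈ [0,1]^ν, and (𝐙,𝐃) satisfies 𝒞(x, cξ⃗_1, Ω) for all x ∈ U. -/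

import Mathlib

open MeasureTheory Metric Filter Set
open scoped ENNReal NNReal Topology

noncomputable section

namespace Zhang

/-- `ℝ^n` with the Euclidean norm. -/
abbrev Euc (n : ℕ) := EuclideanSpace ℝ (Fin n)

/-- Vector fields on `ℝ^n` (as everywhere-defined maps). -/
abbrev VF (n : ℕ) := Euc n → Euc n

/-- `ν`-parameter degrees. -/
abbrev Deg (ν : ℕ) := Fin ν → ℝ

variable {N ν n q : ℕ}

/-- Admissible multi-parameter dilation data `e = {e_1,…,e_N} ⊆ [0,∞)^ν`. -/
def AdmissibleE (e : Fin N → Fin ν → ℝ) : Prop :=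
  (∀ i μ, 0 ≤ e i μ) ∧ (∀ i, ∃ μ, e i μ ≠ 0) ∧ (∀ μ, ∃ i, e i μ ≠ 0)

/-- `δ^d = ∏_μ δ_μ^{d_μ}` (real exponents). -/
def dpow (δ d : Fin ν → ℝ) : ℝ := ∏ μ, δ μ ^ d μ

/-- The multi-parameter dilation `δ t = (δ^{e_1} t_1, …, δ^{e_N} t_N)`. -/
def dilate (e : Fin N → Fin ν → ℝ) (δ : Fin ν → ℝ) (t : Euc N) : Euc N :=
  (EuclideanSpace.equiv (Fin N) ℝ).symm fun i => dpow δ (e i) * t i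

/-- `ς^{(δ)}(t) = δ^{e_1+⋯+e_N} ς(δ t)`. -/
def scaled (e : Fin N → Fin ν → ℝ) (ς : Euc N → ℝ) (δ : Fin ν → ℝ) : Euc N → ℝ :=
  fun t => (∏ i, dpow δ (e i)) * ς (dilate e δ t)

/-- `2^k = (2^{k_1},…,2^{k_ν})`. -/
def twoPow (k : Fin ν → ℕ) : Fin ν → ℝ := fun μ => 2 ^ k μ

/-- The (global) `C^m` supremum norm of a function. -/
def CmSupNorm {E F : Type*} [NormedAddCommGroup E] [NormedSpace ℝ E]
    [NormedAddCommGroup F] [NormedSpace ℝ F] (m : ℕ) (f : E → F) : ℝ :=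
  ∑ j ∈ Finset.range (m + 1), ⨆ t, ‖iteratedFDeriv ℝ j f t‖

/-- The `C^m` supremum norm of a function on a set. -/
def CmSupNormOn {E F : Type*} [NormedAddCommGroup E] [NormedSpace ℝ E]
    [NormedAddCommGroup F] [NormedSpace ℝ F] (m : ℕ) (s : Set E) (f : E → F) : ℝ :=
  ∑ j ∈ Finset.range (m + 1), ⨆ t ∈ s, ‖iteratedFDerivWithin ℝ j f s t‖

/-- The cancellation condition: the integral of `g` in the coordinates `t_i` with
`e_i^μ ≠ 0` vanishes identically as a function of the remaining coordinates. -/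
def CancelCond (e : Fin N → Fin ν → ℝ) (μ : Fin ν) (g : Euc N → ℝ) : Prop :=
  ∀ t : Fin N → ℝ,
    haveI : DecidablePred fun i : Fin N => e i μ ≠ 0 := Classical.decPred _
    (∫ s : {i : Fin N // e i μ ≠ 0} → ℝ,
        g ((EuclideanSpace.equiv (Fin N) ℝ).symm fun i =>
          if h : e i μ ≠ 0 then s ⟨i, h⟩ else t i)) = 0

/-- Kernel data for the class `𝒦(N,e,a,ν)`: a sequence `{ς_k}_{k∈ℕ^ν}` bounded in
`C_c^∞(B^N(a))` satisfying the cancellation conditions. -/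
def IsKernelSeq (e : Fin N → Fin ν → ℝ) (a : ℝ) (ς : (Fin ν → ℕ) → Euc N → ℝ) : Prop :=
  (∀ k, ContDiff ℝ (⊤ : ℕ∞) (ς k)) ∧
  (∀ k, tsupport (ς k) ⊆ ball (0 : Euc N) a) ∧
  (∀ m, ∃ C : ℝ, ∀ k, CmSupNorm m (ς k) ≤ C) ∧
  (∀ k μ, k μ ≠ 0 → CancelCond e μ (ς k))

/-- Membership in the Fréchet space `𝒦̄(N,e,a,ν)` (closed ball support). -/
def MemKbar (e : Fin N → Fin ν → ℝ) (a : ℝ) (ς : (Fin ν → ℕ) → Euc N → ℝ) : Prop :=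
  (∀ k, ContDiff ℝ (⊤ : ℕ∞) (ς k)) ∧
  (∀ k, tsupport (ς k) ⊆ closedBall (0 : Euc N) a) ∧
  (∀ m, ∃ C : ℝ, ∀ k, CmSupNorm m (ς k) ≤ C) ∧
  (∀ k μ, k μ ≠ 0 → CancelCond e μ (ς k))

/-- The seminorm `‖{ς_k}‖_m = sup_k ‖ς_k‖_{C^m}` of `𝒦̄(N,e,a,ν)`. -/
def seqSeminorm (m : ℕ) (ς : (Fin ν → ℕ) → Euc N → ℝ) : ℝ :=
  ⨆ k, CmSupNorm m (ς k)

/-- The multi-indices `k ∈ ℕ^ν` with all coordinates `≤ M`. -/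
def trunc (ν M : ℕ) : Finset (Fin ν → ℕ) :=
  Finset.image (fun k : Fin ν → Fin (M + 1) => fun μ => (k μ : ℕ)) Finset.univ

/-- The partial-sum operators `f ↦ ψ(x) Σ_{|k|≤M} ∫ f(γ_t(x)) ς_k^{(2^k)}(t) dt`. -/
def partialOp (e : Fin N → Fin ν → ℝ) (γ : Euc N → Euc n → Euc n) (ψ : Euc n → ℝ)
    (ς : (Fin ν → ℕ) → Euc N → ℝ) (M : ℕ) (f : Euc n → ℝ) : Euc n → ℝ :=
  fun x => ψ x * ∑ k ∈ trunc ν M, ∫ t : Euc N, f (γ t x) * scaled e (ς k) (twoPow k) t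

/-- `T` is bounded on `L^p`: the partial-sum operators are bounded uniformly in `M`. -/
def OpBounded (p : ℝ) (e : Fin N → Fin ν → ℝ) (γ : Euc N → Euc n → Euc n)
    (ψ : Euc n → ℝ) (ς : (Fin ν → ℕ) → Euc N → ℝ) : Prop :=
  ∃ C : ℝ≥0, ∀ M : ℕ, ∀ f : Euc n → ℝ, ContDiff ℝ (⊤ : ℕ∞) f → HasCompactSupport f →
    eLpNorm (partialOp e γ ψ ς M f) (ENNReal.ofReal p) volume ≤
      C * eLpNorm f (ENNReal.ofReal p) volume

/-- All operators with small `ψ` and small kernels in `𝒦(N,e,a,ν)` are `L^p` bounded. -/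
def AllOpsBounded (p : ℝ) (e : Fin N → Fin ν → ℝ) (γ : Euc N → Euc n → Euc n) : Prop :=
  ∃ ε a : ℝ, 0 < ε ∧ 0 < a ∧
    ∀ ψ : Euc n → ℝ, ContDiff ℝ (⊤ : ℕ∞) ψ → HasCompactSupport ψ →
      tsupport ψ ⊆ ball (0 : Euc n) ε →
      ∀ ς : (Fin ν → ℕ) → Euc N → ℝ, IsKernelSeq e a ς → OpBounded p e γ ψ ς

/-! ### Vector fields, brackets, Carnot–Carathéodory geometry -/

/-- The Lie bracket of two vector fields. -/
def lieBracket (X Y : VF n) : VF n := fun x => fderiv ℝ Y x (X x) - fderiv ℝ X x (Y x)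

/-- `ℒ(S)`: the smallest set of (vector field, degree) pairs containing `S` and
closed under Lie brackets (adding degrees). -/
inductive LieGen (S : Set (VF n × Deg ν)) : VF n × Deg ν → Prop
  | base {P : VF n × Deg ν} : P ∈ S → LieGen S P
  | bracket {X Y : VF n} {d d' : Deg ν} : LieGen S (X, d) → LieGen S (Y, d') →
      LieGen S (lieBracket X Y, d + d')

def lieSpan (S : Set (VF n × Deg ν)) : Set (VF n × Deg ν) := {P | LieGen S P}

def unitCube (ν : ℕ) : Set (Fin ν → ℝ) := {δ | ∀ μ, 0 ≤ δ μ ∧ δ μ ≤ 1}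

def vecConst (ν : ℕ) (ξ : ℝ) : Fin ν → ℝ := fun _ => ξ

/-- `a` is a measurable control with `‖Σ_l |a_l|²‖_{L^∞[0,1]} < 1`. -/
def IsSubunit {ι : Type*} [Fintype ι] (a : ℝ → ι → ℝ) : Prop :=
  (∀ l, Measurable fun s => a s l) ∧
  ∃ c : ℝ, c < 1 ∧ ∀ᵐ s ∂(volume.restrict (Set.Icc (0 : ℝ) 1)), ∑ l, a s l ^ 2 ≤ c

/-- `g` is an absolutely continuous solution of `g' = Σ_l a_l δ^{d_l} X_l(g)`, `g(0)=x`,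
in integral form. -/
def SolvesODE {ι : Type*} [Fintype ι] (X : ι → VF n) (d : ι → Deg ν) (δ : Fin ν → ℝ)
    (a : ℝ → ι → ℝ) (x : Euc n) (g : ℝ → Euc n) : Prop :=
  g 0 = x ∧ ∀ u ∈ Set.Icc (0 : ℝ) 1,
    g u = x + ∫ s in (0 : ℝ)..u, ∑ l, a s l • dpow δ (d l) • X l (g s)

/-- The multi-parameter Carnot–Carathéodory ball `B_{(X,d)}(x,δ)` inside `Ω`. -/
def CCBall {ι : Type*} [Fintype ι] (X : ι → VF n) (d : ι → Deg ν) (Ω : Set (Euc n))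
    (x : Euc n) (δ : Fin ν → ℝ) : Set (Euc n) :=
  {y | ∃ (g : ℝ → Euc n) (a : ℝ → ι → ℝ), IsSubunit a ∧
      (∀ u ∈ Set.Icc (0 : ℝ) 1, g u ∈ Ω) ∧ SolvesODE X d δ a x g ∧ g 1 = y}

/-- `(X,d)` satisfies `𝒞(x,δ,Ω)`. -/
def SatC {ι : Type*} [Fintype ι] (X : ι → VF n) (d : ι → Deg ν) (x : Euc n)
    (δ : Fin ν → ℝ) (Ω : Set (Euc n)) : Prop :=
  ∀ a : ℝ → ι → ℝ, IsSubunit a →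
    ∃ g : ℝ → Euc n, (∀ u ∈ Set.Icc (0 : ℝ) 1, g u ∈ Ω) ∧ SolvesODE X d δ a x g

/-- The derivation of a scalar function along a vector field. -/
def derivAlong (Y : VF n) (f : Euc n → ℝ) : Euc n → ℝ := fun x => fderiv ℝ f x (Y x)

/-- `(δX)^α f`: iterated derivations indexed by the ordered multi-index `α`. -/
def derivList {ι : Type*} (X : ι → VF n) (w : ι → ℝ) (α : List ι) (f : Euc n → ℝ) :
    Euc n → ℝ :=
  α.foldr (fun l g => derivAlong (fun x => w l • X l x) g) f

/-- `(X,d)` controls `(X₀,d₀)` on `U` with parameter `ξ₁` (ambient `Ω`). -/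
def ControlsOn {ι : Type*} [Fintype ι] (X : ι → VF n) (d : ι → Deg ν)
    (Ω U : Set (Euc n)) (ξ₁ : ℝ) (X₀ : VF n) (d₀ : Deg ν) : Prop :=
  (∀ x ∈ U, SatC X d x (vecConst ν ξ₁) Ω) ∧
  ∃ c : Euc n → (Fin ν → ℝ) → ι → Euc n → ℝ,
    (∀ x ∈ U, ∀ δ ∈ unitCube ν, ∀ y ∈ CCBall X d Ω x (fun μ => ξ₁ * δ μ),
      dpow δ d₀ • X₀ y = ∑ l, c x δ l y • dpow δ (d l) • X l y) ∧
    (∀ x ∈ U, ∀ δ ∈ unitCube ν, ∀ l, ∀ α : List ι,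
      ContinuousOn (derivList X (fun l' => dpow δ (d l')) α (c x δ l))
        (CCBall X d Ω x (fun μ => ξ₁ * δ μ))) ∧
    (∀ m : ℕ, ∃ C : ℝ, ∀ x ∈ U, ∀ δ ∈ unitCube ν, ∀ l, ∀ α : List ι, α.length ≤ m →
      ∀ y ∈ CCBall X d Ω x (fun μ => ξ₁ * δ μ),
        |derivList X (fun l' => dpow δ (d l')) α (c x δ l) y| ≤ C)

/-- `(X,d)` controls `(X₀,d₀)` (some `U`, `ξ₁`), ambient `Ω`. -/
def ControlsPair {ι : Type*} [Fintype ι] (X : ι → VF n) (d : ι → Deg ν)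
    (Ω : Set (Euc n)) (X₀ : VF n) (d₀ : Deg ν) : Prop :=
  ∃ (U : Set (Euc n)) (ξ₁ : ℝ), IsOpen U ∧ (0 : Euc n) ∈ U ∧ U ⊆ Ω ∧ 0 < ξ₁ ∧
    ControlsOn X d Ω U ξ₁ X₀ d₀

/-- A finite set of pairs controls a pair (ambient neighborhood existentially quantified). -/
def FinsetControls (F : Finset (VF n × Deg ν)) (P : VF n × Deg ν) : Prop :=
  ∃ Ω : Set (Euc n), IsOpen Ω ∧ (0 : Euc n) ∈ Ω ∧
    ControlsPair (fun l : F => (l : VF n × Deg ν).1) (fun l : F => (l : VF n × Deg ν).2)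
      Ω P.1 P.2

/-- A set `S` of pairs controls a set `T`. -/
def SetControls (S T : Set (VF n × Deg ν)) : Prop :=
  ∃ F : Finset (VF n × Deg ν), ↑F ⊆ S ∧ ∀ P ∈ S ∪ T, FinsetControls F P

/-! ### Degrees, Taylor coefficients, exponential coefficients -/

def degMulti (e : Fin N → Fin ν → ℝ) (α : Fin N → ℕ) : Fin ν → ℝ :=
  fun μ => ∑ i, (α i : ℝ) * e i μ

/-- A degree is pure if it has exactly one nonzero coordinate. -/
def IsPureDeg (dg : Fin ν → ℝ) : Prop := ∃! μ, dg μ ≠ 0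

/-- `t^α`. -/
def monomial (α : Fin N → ℕ) (t : Euc N) : ℝ := ∏ i, t i ^ α i

/-- The multi-indices `α` with `|α| < M`. -/
def multiIdxLt (N M : ℕ) : Finset (Fin N → ℕ) :=
  (trunc N M).filter fun α => ∑ i, α i < M

/-- `X` is the family of Taylor coefficient vector fields of `W` at `t = 0`, on `U`. -/
def IsTaylorFieldOf (W : Euc N → Euc n → Euc n) (U : Set (Euc n))
    (X : (Fin N → ℕ) → VF n) : Prop :=
  X 0 = 0 ∧ (∀ α, ContDiffOn ℝ (⊤ : ℕ∞) (X α) U) ∧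
  ∀ M : ℕ, ∃ C ε : ℝ, 0 < ε ∧ ∀ t ∈ ball (0 : Euc N) ε, ∀ x ∈ U,
    ‖W t x - ∑ α ∈ multiIdxLt N M, monomial α t • X α x‖ ≤ C * ‖t‖ ^ M

/-- `W(t,x) = (d/dε)|_{ε=1} γ_{εt}(γ_t⁻¹(x))` on `B^N(ρ) × U`. -/
def IsWFor (γ : Euc N → Euc n → Euc n) (ρ : ℝ) (U : Set (Euc n))
    (W : Euc N → Euc n → Euc n) : Prop :=
  ∃ γinv : Euc N → Euc n → Euc n,
    (∀ t ∈ ball (0 : Euc N) ρ, ∀ x ∈ U, γ t (γinv t x) = x ∧ γinv t (γ t x) = x) ∧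
    ∀ t ∈ ball (0 : Euc N) ρ, ∀ x ∈ U,
      HasDerivAt (fun ε : ℝ => γ (ε • t) (γinv t x)) (W t x) 1

/-- `y` is the time-one flow of the vector field `V` from `x`. -/
def FlowsTo (V : VF n) (x y : Euc n) : Prop :=
  ∃ φ : ℝ → Euc n, φ 0 = x ∧ φ 1 = y ∧ ∀ s ∈ Set.Icc (0 : ℝ) 1, HasDerivAt φ (V (φ s)) s

/-- `Xh` is the family of exponential coefficient vector fields of `γ`:
`γ_t(x) = e^{Σ_{0<|α|<M} t^α X̂_α} x + O(|t|^M)` for every `M`. -/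
def IsExpFieldsFor (γ : Euc N → Euc n → Euc n) (U : Set (Euc n))
    (Xh : (Fin N → ℕ) → VF n) : Prop :=
  Xh 0 = 0 ∧ (∀ α, ContDiffOn ℝ (⊤ : ℕ∞) (Xh α) U) ∧
  ∀ M : ℕ, ∃ C ε : ℝ, 0 < ε ∧ ∀ t ∈ ball (0 : Euc N) ε, ∀ x ∈ U,
    ∃ y : Euc n, FlowsTo (fun z => ∑ α ∈ multiIdxLt N M, monomial α t • Xh α z) x y ∧
      ‖γ t x - y‖ ≤ C * ‖t‖ ^ M

/-- The pure power set `𝒫` of a family of coefficient fields. -/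
def pureSet (e : Fin N → Fin ν → ℝ) (X : (Fin N → ℕ) → VF n) : Set (VF n × Deg ν) :=
  {P | ∃ α : Fin N → ℕ, α ≠ 0 ∧ IsPureDeg (degMulti e α) ∧ P = (X α, degMulti e α)}

/-- The nonpure power set `𝒩` of a family of coefficient fields. -/
def nonpureSet (e : Fin N → Fin ν → ℝ) (X : (Fin N → ℕ) → VF n) : Set (VF n × Deg ν) :=
  {P | ∃ α : Fin N → ℕ, α ≠ 0 ∧ ¬ IsPureDeg (degMulti e α) ∧ P = (X α, degMulti e α)}

/-! ### Strong control -/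

/-- `(X,d)` strongly controls `(X₀,d₀)`. -/
def StrongControlsOn {ι : Type*} [Fintype ι] (X : ι → VF n) (d : ι → Deg ν)
    (X₀ : VF n) (d₀ : Deg ν) : Prop :=
  ∃ (U V : Set (Euc n)) (c : ι → Euc n → ℝ),
    IsOpen U ∧ (0 : Euc n) ∈ U ∧ IsOpen V ∧ closure U ⊆ V ∧
    (∀ l, ContDiffOn ℝ (⊤ : ℕ∞) (c l) V) ∧
    (∀ l, ¬ (∀ μ, d l μ ≤ d₀ μ) → c l = 0) ∧
    (∀ x ∈ U, X₀ x = ∑ l, c l x • X l x)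

/-- A finite set of pairs strongly controls a pair. -/
def FinsetStrongControls (F : Finset (VF n × Deg ν)) (P : VF n × Deg ν) : Prop :=
  StrongControlsOn (fun l : F => (l : VF n × Deg ν).1) (fun l : F => (l : VF n × Deg ν).2)
    P.1 P.2

/-- `(X,d)` strongly controls `W(t,x)`. -/
def StrongControlsW {ι : Type*} [Fintype ι] (X : ι → VF n) (d : ι → Deg ν)
    (e : Fin N → Fin ν → ℝ) (W : Euc N → Euc n → Euc n) : Prop :=
  ∃ (ρ' : ℝ) (U : Set (Euc n)) (V : Set (Euc N × Euc n)) (A : Finset (Fin N → ℕ))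
    (c : ι → (Fin N → ℕ) → Euc N → Euc n → ℝ),
    0 < ρ' ∧ IsOpen U ∧ (0 : Euc n) ∈ U ∧ IsOpen V ∧
    closure (ball (0 : Euc N) ρ' ×ˢ U) ⊆ V ∧
    (∀ l α, ContDiffOn ℝ (⊤ : ℕ∞) (fun p : Euc N × Euc n => c l α p.1 p.2) V) ∧
    (∀ l α, degMulti e α ≠ d l → c l α = 0) ∧
    (∀ t ∈ ball (0 : Euc N) ρ', ∀ x ∈ U,
      W t x = ∑ l, ∑ α ∈ A, (c l α t x * monomial α t) • X l x)

/-- A finite set of pairs strongly controls `W`. -/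
def FinsetStrongControlsW (F : Finset (VF n × Deg ν)) (e : Fin N → Fin ν → ℝ)
    (W : Euc N → Euc n → Euc n) : Prop :=
  StrongControlsW (fun l : F => (l : VF n × Deg ν).1) (fun l : F => (l : VF n × Deg ν).2)
    e W

/-! ### Control of `W` -/

/-- `∂_{t_i}` applied to a function of `(t,u)`. -/
def derivTAlong (i : Fin N) (f : Euc N → Euc n → ℝ) : Euc N → Euc n → ℝ :=
  fun t u => fderiv ℝ (fun s => f s u) t (EuclideanSpace.single i (1 : ℝ))

/-- Iterated `t`-partials indexed by an ordered multi-index. -/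
def derivTList (β : List (Fin N)) (f : Euc N → Euc n → ℝ) : Euc N → Euc n → ℝ :=
  β.foldr derivTAlong f

/-- Iterated `u`-derivations along scaled vector fields. -/
def derivUList {ι : Type*} (X : ι → VF n) (w : ι → ℝ) (β : List ι)
    (f : Euc N → Euc n → ℝ) : Euc N → Euc n → ℝ :=
  fun t => derivList X w β (f t)

/-- `(X,d)` controls `W` on `U` for `t ∈ B^N(ρ')` with parameter `ξ₁` (ambient `Ω`). -/
def ControlsWOn {ι : Type*} [Fintype ι] (X : ι → VF n) (d : ι → Deg ν)
    (e : Fin N → Fin ν → ℝ) (Ω U : Set (Euc n)) (ρ' ξ₁ : ℝ)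
    (W : Euc N → Euc n → Euc n) : Prop :=
  (∀ x ∈ U, SatC X d x (vecConst ν ξ₁) Ω) ∧
  ∃ c : Euc n → (Fin ν → ℝ) → ι → Euc N → Euc n → ℝ,
    (∀ x ∈ U, ∀ δ ∈ unitCube ν, ∀ t ∈ ball (0 : Euc N) ρ',
      ∀ u ∈ CCBall X d Ω x (fun μ => ξ₁ * δ μ),
        W (dilate e δ t) u = ∑ l, c x δ l t u • dpow δ (d l) • X l u) ∧
    (∀ x ∈ U, ∀ δ ∈ unitCube ν, ∀ l, ∀ β' : List (Fin N), ∀ β : List ι,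
      ContinuousOn
        (fun p : Euc N × Euc n =>
          derivTList β' (derivUList X (fun l' => dpow δ (d l')) β (c x δ l)) p.1 p.2)
        (ball (0 : Euc N) ρ' ×ˢ CCBall X d Ω x (fun μ => ξ₁ * δ μ))) ∧
    (∀ m : ℕ, ∃ C : ℝ, ∀ x ∈ U, ∀ δ ∈ unitCube ν, ∀ l, ∀ β' : List (Fin N), ∀ β : List ι,
      β'.length + β.length ≤ m → ∀ t ∈ ball (0 : Euc N) ρ',
        ∀ u ∈ CCBall X d Ω x (fun μ => ξ₁ * δ μ),
          |derivTList β' (derivUList X (fun l' => dpow δ (d l')) β (c x δ l)) t u| ≤ C)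

/-- `(X,d)` controls `W` (some `ρ' ≤ ρ`, `ξ₁`, `U`), ambient `Ω`. -/
def ControlsW {ι : Type*} [Fintype ι] (X : ι → VF n) (d : ι → Deg ν)
    (e : Fin N → Fin ν → ℝ) (Ω : Set (Euc n)) (ρ : ℝ)
    (W : Euc N → Euc n → Euc n) : Prop :=
  ∃ (ρ' ξ₁ : ℝ) (U : Set (Euc n)), 0 < ρ' ∧ ρ' ≤ ρ ∧ 0 < ξ₁ ∧ IsOpen U ∧
    (0 : Euc n) ∈ U ∧ U ⊆ Ω ∧ ControlsWOn X d e Ω U ρ' ξ₁ W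

end Zhang

open Zhang

/-! Let `c` be small. Where control holds, a trajectory of the `Z` fields at scale `cξ₁δ` has as
velocity a combination of the fields `(ξ₁δ)^{d_l} X_l` with coefficients of `ℓ²` norm at most
`1 / √2`, so it is a subunit trajectory of these fields. Since control holds only on the ball
`B(x, ξ₁δ)` itself, which need not be open or closed, the point is that the trajectory never leaves
that ball.

For a compact set `K`, the set `R` of points reached from `x` inside `K` with controls of `ℓ²` norm
at most `1 / √2` is closed, by weak compactness of these controls. Hence the coefficients extend
continuously from `R` to the whole space. Solve the equation of the `Z`-trajectory with the extended
coefficients: as long as it remains in `K`, the solution is a trajectory of the `X` fields, so it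
remains in `R`, where the coefficients are the original ones. It therefore solves the equation of
the `Z`-trajectory, and equals it by uniqueness, `K` being a neighborhood of that trajectory.

As for existence, a maximal trajectory of the `Z` fields follows a trajectory of the `X` fields,
which by `𝒞` cannot leave `Ω`. -/

namespace Zhang

section Trajectories

lemma eq_zero_of_le_mul_integral {φ : ℝ → ℝ} {u C : ℝ} (hφ : ContinuousOn φ (Icc 0 u))
    (hφ₀ : ∀ t ∈ Icc 0 u, 0 ≤ φ t) (h : ∀ t ∈ Icc 0 u, φ t ≤ C * ∫ s in (0 : ℝ)..t, φ s) :
    ∀ t ∈ Icc 0 u, φ t = 0 := by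
  intro t ht
  have hu : 0 ≤ u := ht.1.trans ht.2
  have hinteg : ∀ s ∈ Icc 0 u, IntervalIntegrable φ volume 0 s := fun s hs =>
    (hφ.mono (uIcc_subset_Icc ⟨le_rfl, hu⟩ hs)).intervalIntegrable
  have hcont : ContinuousOn (fun t => ∫ s in (0 : ℝ)..t, φ s) (Icc 0 u) := by
    simpa only [uIcc_of_le hu] using
      intervalIntegral.continuousOn_primitive_interval' (hinteg u ⟨hu, le_rfl⟩) left_mem_uIcc
  have hderiv : ∀ s ∈ Ico 0 u,
      HasDerivWithinAt (fun t => ∫ s in (0 : ℝ)..t, φ s) (φ s) (Ici s) s := by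
    intro s hs
    have hcs : ContinuousWithinAt φ (Icc s u) s :=
      (hφ s ⟨hs.1, hs.2.le⟩).mono (Icc_subset_Icc_left hs.1)
    have : Fact (s ∈ Icc s u) := ⟨⟨le_rfl, hs.2.le⟩⟩
    refine (intervalIntegral.integral_hasDerivWithinAt_right (hinteg s ⟨hs.1, hs.2.le⟩)
      ((hφ.mono (Icc_subset_Icc_left hs.1)).stronglyMeasurableAtFilter_nhdsWithin
        measurableSet_Icc s) hcs).mono_of_mem_nhdsWithin (Icc_mem_nhdsGE hs.2)
  have hzero := eq_zero_of_abs_deriv_le_mul_abs_self_of_eq_zero_right (K := C) hcont hderiv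
    (by simp) fun s hs => by
      have hs' : s ∈ Icc 0 u := ⟨hs.1, hs.2.le⟩
      rw [Real.norm_of_nonneg (hφ₀ s hs'), Real.norm_of_nonneg
        (intervalIntegral.integral_nonneg hs.1 fun r hr => hφ₀ r ⟨hr.1, hr.2.trans hs'.2⟩)]
      exact h s hs'
  exact le_antisymm (by simpa only [hzero t ht, mul_zero] using h t ht) (hφ₀ t ht)

variable {E : Type*} [NormedAddCommGroup E] [NormedSpace ℝ E] {F G : ℝ → E → E} {Ω K : Set E}
  {x : E} {g h : ℝ → E} {u v : ℝ}

/-- `g` is an integral curve in `Ω` of the time-dependent vector field `F` on `[0, u]`, starting at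
`x`. Integrability of `F` along `g` is required, so that the integral has no junk value. -/
structure IsTrajectory (F : ℝ → E → E) (Ω : Set E) (x : E) (u : ℝ) (g : ℝ → E) : Prop where
  intervalIntegrable : IntervalIntegrable (fun s => F s (g s)) volume 0 u
  mapsTo : MapsTo g (Icc 0 u) Ω
  eq_add_integral : ∀ t ∈ Icc 0 u, g t = x + ∫ s in (0 : ℝ)..t, F s (g s)

namespace IsTrajectory

lemma intervalIntegrable_of_mem (hg : IsTrajectory F Ω x u g) {s t : ℝ} (hs : s ∈ Icc 0 u)
    (ht : t ∈ Icc 0 u) : IntervalIntegrable (fun s => F s (g s)) volume s t :=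
  hg.intervalIntegrable.mono_set (by
    rw [uIcc_of_le (hs.1.trans hs.2)]
    exact uIcc_subset_Icc hs ht)

lemma restrict (hg : IsTrajectory F Ω x u g) (hv : v ∈ Icc 0 u) : IsTrajectory F Ω x v g where
  intervalIntegrable := hg.intervalIntegrable_of_mem ⟨le_rfl, hv.1.trans hv.2⟩ hv
  mapsTo := hg.mapsTo.mono_left (Icc_subset_Icc_right hv.2)
  eq_add_integral t ht := hg.eq_add_integral t ⟨ht.1, ht.2.trans hv.2⟩

lemma codRestrict (hg : IsTrajectory F Ω x u g) (hK : MapsTo g (Icc 0 u) K) :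
    IsTrajectory F K x u g :=
  ⟨hg.intervalIntegrable, hK, hg.eq_add_integral⟩

lemma mono (hg : IsTrajectory F K x u g) (hK : K ⊆ Ω) : IsTrajectory F Ω x u g :=
  hg.codRestrict (hg.mapsTo.mono_right hK)

lemma congr (hg : IsTrajectory F Ω x u g) (hu : 0 ≤ u) (hgh : EqOn g h (Icc 0 u))
    (hFG : ∀ t ∈ Ioo 0 u, F t (g t) = G t (h t)) : IsTrajectory G Ω x u h where
  intervalIntegrable := hg.intervalIntegrable.congr_uIoo fun t ht => hFG t (uIoo_of_le hu ▸ ht)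
  mapsTo := hg.mapsTo.congr hgh
  eq_add_integral t ht := by
    rw [← hgh ht, hg.eq_add_integral t ht, intervalIntegral.integral_congr_Ioo_of_le ht.1]
    exact fun s hs => hFG s ⟨hs.1, hs.2.trans_le ht.2⟩

lemma extend_const (hg : IsTrajectory F Ω x v g) (hv : v ∈ Icc 0 u) :
    IsTrajectory (fun s z => if s ≤ v then F s z else 0) Ω x u (fun s => g (min s v)) := by
  have hmin : ∀ s, 0 ≤ s → min s v ∈ Icc 0 v := fun s hs => ⟨le_min hs hv.1, min_le_right _ _⟩
  have hind : (fun s => if s ≤ v then F s (g (min s v)) else 0) =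
      (Iic v).indicator fun s => F s (g s) := by
    funext s
    by_cases hs : s ≤ v <;> simp [hs]
  refine ⟨?_, fun s hs => hg.mapsTo (hmin s hs.1), fun t ht => ?_⟩
  · rw [hind, intervalIntegrable_iff_integrableOn_Ioc_of_le (hv.1.trans hv.2), IntegrableOn,
      integrable_indicator_iff measurableSet_Iic, IntegrableOn,
      Measure.restrict_restrict measurableSet_Iic, Iic_inter_Ioc_of_le hv.2]
    exact (intervalIntegrable_iff_integrableOn_Ioc_of_le hv.1).1 hg.intervalIntegrable
  · rw [hg.eq_add_integral _ (hmin t ht.1), hind]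
    rcases le_total t v with htv | hvt
    · rw [min_eq_left htv]
      exact congrArg (x + ·) (intervalIntegral.integral_congr_Ioo_of_le ht.1 fun s hs =>
        (indicator_of_mem (mem_Iic.2 (hs.2.le.trans htv)) fun s => F s (g s)).symm)
    · rw [min_eq_right hvt]
      exact congrArg (x + ·) (intervalIntegral.integral_indicator ⟨hv.1, hvt⟩).symm

lemma apply_zero (hg : IsTrajectory F Ω x u g) (hu : 0 ≤ u) : g 0 = x := by
  simpa using hg.eq_add_integral 0 ⟨le_rfl, hu⟩

lemma continuousOn (hg : IsTrajectory F Ω x u g) : ContinuousOn g (Icc 0 u) := by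
  rcases lt_or_ge u 0 with hu | hu
  · simp [Icc_eq_empty_of_lt hu]
  · refine (continuousOn_const.add ?_).congr hg.eq_add_integral
    simpa only [uIcc_of_le hu] using
      intervalIntegral.continuousOn_primitive_interval' hg.intervalIntegrable left_mem_uIcc

lemma sub_eq_integral (hg : IsTrajectory F Ω x u g) {s t : ℝ} (hs : s ∈ Icc 0 u)
    (ht : t ∈ Icc 0 u) : g t - g s = ∫ r in s..t, F r (g r) := by
  have h₀ : (0 : ℝ) ∈ Icc 0 u := ⟨le_rfl, hs.1.trans hs.2⟩
  rw [hg.eq_add_integral s hs, hg.eq_add_integral t ht, add_sub_add_left_eq_sub,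
    intervalIntegral.integral_interval_sub_left (hg.intervalIntegrable_of_mem h₀ ht)
      (hg.intervalIntegrable_of_mem h₀ hs)]

lemma lipschitzOnWith (hg : IsTrajectory F Ω x u g) {M : ℝ≥0}
    (hM : ∀ t, ∀ z ∈ Ω, ‖F t z‖ ≤ M) : LipschitzOnWith M g (Icc 0 u) :=
  LipschitzOnWith.of_dist_le_mul fun t ht s hs => by
    rw [dist_eq_norm, hg.sub_eq_integral hs ht, Real.dist_eq]
    refine intervalIntegral.norm_integral_le_of_norm_le_const fun r hr => hM r _ (hg.mapsTo ?_)
    exact uIcc_subset_Icc hs ht (uIoc_subset_uIcc hr)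

lemma eqOn (hg : IsTrajectory F Ω x u g) (hh : IsTrajectory F Ω x u h) {C : ℝ≥0}
    (hF : ∀ t, LipschitzOnWith C (F t) Ω) : EqOn g h (Icc 0 u) := by
  have hcont := (hg.continuousOn.sub hh.continuousOn).norm
  refine fun t ht => sub_eq_zero.1 (norm_eq_zero.1 (eq_zero_of_le_mul_integral (C := C) hcont
    (fun _ _ => norm_nonneg _) (fun s hs => ?_) t ht))
  have h₀ : (0 : ℝ) ∈ Icc 0 u := ⟨le_rfl, hs.1.trans hs.2⟩
  rw [Pi.sub_apply, hg.eq_add_integral s hs, hh.eq_add_integral s hs, add_sub_add_left_eq_sub,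
    ← intervalIntegral.integral_sub (hg.intervalIntegrable_of_mem h₀ hs)
      (hh.intervalIntegrable_of_mem h₀ hs), ← intervalIntegral.integral_const_mul]
  refine intervalIntegral.norm_integral_le_of_norm_le hs.1 (ae_of_all _ fun r hr => ?_)
    ((hcont.mono (uIcc_subset_Icc h₀ hs)).intervalIntegrable.const_mul _)
  have hr' : r ∈ Icc 0 u := ⟨hr.1.le, hr.2.trans hs.2⟩
  simpa only [dist_eq_norm, Pi.sub_apply] using
    (hF r).dist_le_mul _ (hg.mapsTo hr') _ (hh.mapsTo hr')

end IsTrajectory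

end Trajectories

section Controls

variable {ι E : Type*} [Fintype ι] [NormedAddCommGroup E] [NormedSpace ℝ E] {Y : ι → E → E}
  {b : ℝ → ι → ℝ} {r u : ℝ} {K Ω : Set E} {g : ℝ → E} {x : E}

/-- A measurable control whose values lie in the Euclidean ball of squared radius `r` at every
time. Measurability is stated componentwise, as in `IsSubunit`. -/
structure IsBoundedControl (r : ℝ) (b : ℝ → ι → ℝ) : Prop where
  measurable : ∀ l, Measurable fun s => b s l
  sum_sq_le : ∀ s, ∑ l, b s l ^ 2 ≤ r

/-- The time-dependent vector field `∑ l, b_l(t) Y_l` obtained by driving the vector fields `Y`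
with the control `b`. -/
def controlField (Y : ι → E → E) (b : ℝ → ι → ℝ) (t : ℝ) (z : E) : E :=
  ∑ l, b t l • Y l z

namespace IsBoundedControl

lemma nonneg (hb : IsBoundedControl r b) : 0 ≤ r :=
  (Finset.sum_nonneg fun _ _ => sq_nonneg _).trans (hb.sum_sq_le 0)

lemma abs_le (hb : IsBoundedControl r b) (s : ℝ) (l : ι) : |b s l| ≤ √r :=
  Real.abs_le_sqrt <| (Finset.single_le_sum (f := fun l => b s l ^ 2)
    (fun _ _ => sq_nonneg _) (Finset.mem_univ l)).trans (hb.sum_sq_le s)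

lemma zero (hr : 0 ≤ r) : IsBoundedControl r (0 : ℝ → ι → ℝ) where
  measurable _ := measurable_const
  sum_sq_le _ := by simpa using hr

lemma ite (hb : IsBoundedControl r b) {p : ℝ → Prop} [DecidablePred p]
    (hp : MeasurableSet {s | p s}) : IsBoundedControl r (fun s => if p s then b s else 0) where
  measurable l := by
    simpa only [ite_apply] using Measurable.ite hp (hb.measurable l) measurable_const
  sum_sq_le s := by
    split_ifs
    · exact hb.sum_sq_le s
    · simpa using hb.nonneg

lemma intervalIntegrable_smul {F : Type*} [NormedAddCommGroup F] [NormedSpace ℝ F] {f : ℝ → F}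
    (hb : IsBoundedControl r b) (l : ι) {s t : ℝ} (hf : ContinuousOn f (uIcc s t)) :
    IntervalIntegrable (fun s => b s l • f s) volume s t := by
  refine IntervalIntegrable.smul_continuousOn ?_ hf
  refine (intervalIntegrable_const (c := √r)).mono_fun
    (hb.measurable l).aestronglyMeasurable (ae_of_all _ fun s => ?_)
  simpa only [Real.norm_eq_abs, abs_of_nonneg (Real.sqrt_nonneg r)] using hb.abs_le s l

lemma intervalIntegrable_controlField (hb : IsBoundedControl r b)
    (hY : ∀ l, ContinuousOn (Y l) K) {s t : ℝ} (hg : ContinuousOn g (uIcc s t))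
    (hK : MapsTo g (uIcc s t) K) :
    IntervalIntegrable (fun s => controlField Y b s (g s)) volume s t := by
  simpa only [controlField, Finset.sum_fn, Function.comp_apply] using
    IntervalIntegrable.sum Finset.univ fun l _ =>
      hb.intervalIntegrable_smul l ((hY l).comp hg hK)

lemma norm_controlField_le (hb : IsBoundedControl r b) {C : ι → ℝ} {z : E}
    (hC : ∀ l, ‖Y l z‖ ≤ C l) (t : ℝ) : ‖controlField Y b t z‖ ≤ ∑ l, √r * C l := by
  refine norm_sum_le_of_le _ fun l _ => ?_
  rw [norm_smul, Real.norm_eq_abs]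
  exact mul_le_mul (hb.abs_le t l) (hC l) (norm_nonneg _) (Real.sqrt_nonneg r)

end IsBoundedControl

lemma exists_norm_controlField_le (hK : IsCompact K) (hY : ∀ l, ContinuousOn (Y l) K) (r : ℝ) :
    ∃ M : ℝ≥0, ∀ b, IsBoundedControl r b → ∀ t, ∀ z ∈ K, ‖controlField Y b t z‖ ≤ M := by
  choose C hC using fun l => hK.exists_bound_of_continuousOn (hY l)
  exact ⟨(∑ l, √r * C l).toNNReal, fun b hb t z hz =>
    (hb.norm_controlField_le (fun l => hC l z hz) t).trans (Real.le_coe_toNNReal _)⟩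

lemma exists_lipschitzOnWith_controlField (hK : IsCompact K)
    (hY : ∀ l, LocallyLipschitzOn K (Y l)) (r : ℝ) :
    ∃ C : ℝ≥0, ∀ b, IsBoundedControl r b → ∀ t, LipschitzOnWith C (controlField Y b t) K := by
  choose C hC using fun l => (hY l).exists_lipschitzOnWith_of_compact hK
  refine ⟨∑ l, (√r).toNNReal * C l, fun b hb t =>
    LipschitzOnWith.of_dist_le_mul fun z hz w hw => ?_⟩
  simp only [controlField, dist_eq_norm, ← Finset.sum_sub_distrib, ← smul_sub, NNReal.coe_sum,
    NNReal.coe_mul, Real.coe_toNNReal _ (Real.sqrt_nonneg r), Finset.sum_mul, mul_assoc]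
  refine norm_sum_le_of_le _ fun l _ => ?_
  rw [norm_smul, Real.norm_eq_abs]
  exact mul_le_mul (hb.abs_le t l) (by simpa only [dist_eq_norm] using (hC l).dist_le_mul z hz w hw)
    (norm_nonneg _) (Real.sqrt_nonneg r)

lemma IsTrajectory.eqOn_of_locallyLipschitzOn {h : ℝ → E}
    (hg : IsTrajectory (controlField Y b) Ω x u g) (hh : IsTrajectory (controlField Y b) Ω x u h)
    (hb : IsBoundedControl r b) (hY : ∀ l, LocallyLipschitzOn Ω (Y l)) : EqOn g h (Icc 0 u) := by
  have hK : IsCompact (g '' Icc 0 u ∪ h '' Icc 0 u) :=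
    (isCompact_Icc.image_of_continuousOn hg.continuousOn).union
      (isCompact_Icc.image_of_continuousOn hh.continuousOn)
  have hKΩ : g '' Icc 0 u ∪ h '' Icc 0 u ⊆ Ω :=
    union_subset hg.mapsTo.image_subset hh.mapsTo.image_subset
  obtain ⟨C, hC⟩ := exists_lipschitzOnWith_controlField hK (fun l => (hY l).mono hKΩ) r
  exact (hg.codRestrict fun t ht => .inl (mem_image_of_mem g ht)).eqOn
    (hh.codRestrict fun t ht => .inr (mem_image_of_mem h ht)) (hC b hb)

end Controls

section WeakCompactness

lemma exists_subseq_tendsto_of_lipschitzOnWith {α β : Type*} [PseudoMetricSpace α] [MetricSpace β]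
    {S : Set α} {K : Set β} {f : ℕ → α → β} {C : ℝ≥0} (hS : IsCompact S) (hK : IsCompact K)
    (hf : ∀ N, LipschitzOnWith C (f N) S) (hfK : ∀ N, MapsTo (f N) S K) :
    ∃ φ : ℕ → ℕ, StrictMono φ ∧ ∃ g : α → β, LipschitzOnWith C g S ∧
      ∀ t ∈ S, Tendsto (fun k => f (φ k) t) atTop (𝓝 (g t)) := by
  classical
  have : CompactSpace S := isCompact_iff_compactSpace.1 hS
  let F : ℕ → BoundedContinuousFunction S β := fun N =>
    BoundedContinuousFunction.mkOfCompact ⟨S.domRestrict (f N), (hf N).to_restrict.continuous⟩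
  have hcomp : IsCompact (closure (range F)) := by
    refine BoundedContinuousFunction.arzela_ascoli K hK _ ?_
      (LipschitzWith.uniformEquicontinuous _ C ?_).equicontinuous
    · rintro _ t ⟨N, rfl⟩
      exact hfK N t.2
    · rintro ⟨_, N, rfl⟩
      exact (hf N).to_restrict
  obtain ⟨F₀, -, φ, hφ, hlim⟩ := hcomp.tendsto_subseq fun N => subset_closure (mem_range_self N)
  have hptw : ∀ t : S, Tendsto (fun k => f (φ k) t) atTop (𝓝 (F₀ t)) :=
    (BoundedContinuousFunction.tendsto_iff_tendstoUniformly.1 hlim).tendsto_at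
  refine ⟨φ, hφ, fun t => if ht : t ∈ S then F₀ ⟨t, ht⟩ else f 0 t, ?_, fun t ht => ?_⟩
  · refine LipschitzOnWith.of_dist_le_mul fun t ht s hs => ?_
    simpa only [dif_pos ht, dif_pos hs] using le_of_tendsto' ((hptw ⟨t, ht⟩).dist (hptw ⟨s, hs⟩))
      fun k => (hf (φ k)).dist_le_mul t ht s hs
  · simpa only [dif_pos ht] using hptw ⟨t, ht⟩

variable {ι : Type*} [Fintype ι] {b : ℝ → ι → ℝ} {r u : ℝ}

lemma IsBoundedControl.exists_lipschitzWith_deriv_eq (hb : IsBoundedControl r b) :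
    ∃ P : ℝ → EuclideanSpace ℝ ι, LipschitzWith (√r).toNNReal P ∧ P 0 = 0 ∧
      ∀ᵐ s, deriv P s = WithLp.toLp 2 (b s) := by
  have hmeas : Measurable fun s => WithLp.toLp 2 (b s) :=
    (WithLp.measurable_toLp 2 _).comp (measurable_pi_lambda _ hb.measurable)
  have hnorm : ∀ s, ‖WithLp.toLp 2 (b s)‖ ≤ √r := fun s => by
    simpa only [EuclideanSpace.norm_eq, Real.norm_eq_abs, sq_abs] using
      Real.sqrt_le_sqrt (hb.sum_sq_le s)
  have hinteg : LocallyIntegrable (fun s => WithLp.toLp 2 (b s)) volume :=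
    (locallyIntegrable_const (√r)).mono hmeas.aestronglyMeasurable
      (ae_of_all _ fun s => (hnorm s).trans (le_abs_self _))
  have hintv : ∀ s t, IntervalIntegrable (fun s => WithLp.toLp 2 (b s)) volume s t := fun s t =>
    (hinteg.integrableOn_isCompact isCompact_uIcc).intervalIntegrable
  refine ⟨fun t => ∫ s in (0 : ℝ)..t, WithLp.toLp 2 (b s), ?_, intervalIntegral.integral_same, ?_⟩
  · refine LipschitzWith.of_dist_le_mul fun t s => ?_
    rw [dist_eq_norm, intervalIntegral.integral_interval_sub_left (hintv 0 t) (hintv 0 s),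
      Real.coe_toNNReal _ (Real.sqrt_nonneg r)]
    exact intervalIntegral.norm_integral_le_of_norm_le_const fun s _ => hnorm s
  · filter_upwards [LocallyIntegrable.ae_hasDerivAt_integral hinteg] with s hs using (hs 0).deriv

lemma isBoundedControl_deriv {P : ℝ → EuclideanSpace ℝ ι}
    (hP : LipschitzWith (√r).toNNReal P) (hr : 0 ≤ r) :
    IsBoundedControl r fun s l => deriv P s l where
  measurable l := (EuclideanSpace.proj l : EuclideanSpace ℝ ι →L[ℝ] ℝ).measurable.comp
    (measurable_deriv P)
  sum_sq_le s := by
    have h := norm_deriv_le_of_lipschitz (x₀ := s) hP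
    rw [Real.coe_toNNReal _ (Real.sqrt_nonneg r), EuclideanSpace.norm_eq,
      Real.sqrt_le_sqrt_iff hr] at h
    simpa only [Real.norm_eq_abs, sq_abs] using h

lemma integral_mul_deriv_apply {P : ℝ → EuclideanSpace ℝ ι} {C : ℝ≥0} (hP : LipschitzWith C P)
    {f : ℝ → ℝ} {s t : ℝ} (hf : AbsolutelyContinuousOnInterval f s t) (l : ι) :
    ∫ σ in s..t, f σ * deriv P σ l =
      f t * P t l - f s * P s l - ∫ σ in s..t, deriv f σ * P σ l := by
  let proj : EuclideanSpace ℝ ι →L[ℝ] ℝ := EuclideanSpace.proj l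
  have hPl : AbsolutelyContinuousOnInterval (fun σ => P σ l) s t :=
    (proj.lipschitz.comp hP).lipschitzOnWith.absolutelyContinuousOnInterval
  rw [← hf.integral_mul_deriv_eq_deriv_mul hPl]
  refine intervalIntegral.integral_congr_ae ?_
  filter_upwards [hP.ae_differentiableAt_real] with σ hσ _
  have hderiv : HasDerivAt (fun σ => P σ l) (deriv P σ l) σ :=
    proj.hasFDerivAt.comp_hasDerivAt σ hσ.hasDerivAt
  rw [hderiv.deriv]

lemma tendsto_integral_mul_deriv_apply {P : ℕ → ℝ → EuclideanSpace ℝ ι}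
    {Q : ℝ → EuclideanSpace ℝ ι} {C : ℝ≥0} (hP : ∀ N, LipschitzWith C (P N))
    (hP₀ : ∀ N, P N 0 = 0) (hQ : LipschitzWith C Q) {t : ℝ}
    (hPQ : ∀ s ∈ uIcc 0 t, Tendsto (fun N => P N s) atTop (𝓝 (Q s))) {f : ℝ → ℝ}
    (hf : AbsolutelyContinuousOnInterval f 0 t) (l : ι) :
    Tendsto (fun N => ∫ s in (0 : ℝ)..t, f s * deriv (P N) s l) atTop
      (𝓝 (∫ s in (0 : ℝ)..t, f s * deriv Q s l)) := by
  have hPQl : ∀ s ∈ uIcc 0 t, Tendsto (fun N => P N s l) atTop (𝓝 (Q s l)) := fun s hs =>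
    ((EuclideanSpace.proj l : EuclideanSpace ℝ ι →L[ℝ] ℝ).continuous.tendsto _).comp (hPQ s hs)
  have hbound : ∀ N, ∀ s ∈ uIoc 0 t, ‖deriv f s * P N s l‖ ≤ ‖deriv f s‖ * (C * |t|) := by
    intro N s hs
    have hst : |s| ≤ |t| := by simpa using abs_sub_left_of_mem_uIcc (uIoc_subset_uIcc hs)
    rw [norm_mul]
    gcongr
    calc ‖P N s l‖ ≤ ‖P N s‖ := PiLp.norm_apply_le _ _
      _ = dist (P N s) (P N 0) := by rw [hP₀, dist_zero_right]
      _ ≤ C * |s| := by simpa using (hP N).dist_le_mul s 0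
      _ ≤ C * |t| := by gcongr
  simp only [integral_mul_deriv_apply (hP _) hf, integral_mul_deriv_apply hQ hf]
  refine (((hPQl t right_mem_uIcc).const_mul _).sub ((hPQl 0 left_mem_uIcc).const_mul _)).sub
    (intervalIntegral.tendsto_integral_filter_of_dominated_convergence _
      (.of_forall fun N => ?_) (.of_forall fun N => ae_of_all _ (hbound N))
      (hf.intervalIntegrable_deriv.norm.mul_const _)
      (ae_of_all _ fun s hs => (hPQl s (uIoc_subset_uIcc hs)).const_mul _))
  have hPl : Continuous fun s => P N s l :=
    (EuclideanSpace.proj l : EuclideanSpace ℝ ι →L[ℝ] ℝ).continuous.comp (hP N).continuous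
  exact ((measurable_deriv f).mul hPl.measurable).aestronglyMeasurable

lemma exists_subseq_tendsto_integral_control {b : ℕ → ℝ → ι → ℝ}
    (hb : ∀ N, IsBoundedControl r (b N)) (hu : 0 ≤ u) :
    ∃ φ : ℕ → ℕ, StrictMono φ ∧ ∃ β, IsBoundedControl r β ∧
      ∀ f : ℝ → ℝ, ∀ t ∈ Icc 0 u, AbsolutelyContinuousOnInterval f 0 t → ∀ l,
        Tendsto (fun k => ∫ s in (0 : ℝ)..t, f s * b (φ k) s l) atTop
          (𝓝 (∫ s in (0 : ℝ)..t, f s * β s l)) := by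
  choose P hP hP₀ hPb using fun N => (hb N).exists_lipschitzWith_deriv_eq
  have hPball : ∀ N, MapsTo (P N) (Icc 0 u) (closedBall 0 ((√r).toNNReal * u)) := fun N t ht => by
    rw [mem_closedBall, ← hP₀ N]
    refine ((hP N).dist_le_mul t 0).trans ?_
    rw [Real.dist_0_eq_abs, abs_of_nonneg ht.1]
    gcongr
    exact ht.2
  obtain ⟨φ, hφ, Q₀, hQ₀, hlim⟩ := exists_subseq_tendsto_of_lipschitzOnWith isCompact_Icc
    (isCompact_closedBall _ _) (fun N => (hP N).lipschitzOnWith) hPball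
  have hQ : LipschitzWith (√r).toNNReal (IccExtend hu ((Icc 0 u).domRestrict Q₀)) := by
    have h := hQ₀.to_restrict.comp (LipschitzWith.projIcc hu)
    rw [mul_one] at h
    exact h
  refine ⟨φ, hφ, _, isBoundedControl_deriv hQ (hb 0).nonneg, fun f t ht hf l => ?_⟩
  have := tendsto_integral_mul_deriv_apply (fun k => hP (φ k)) (fun k => hP₀ (φ k)) hQ
    (fun s hs => ?_) hf l
  · refine this.congr fun k => intervalIntegral.integral_congr_ae ?_
    filter_upwards [hPb (φ k)] with s hs _
    rw [hs]
  · have hs' : s ∈ Icc 0 u := uIcc_subset_Icc ⟨le_rfl, hu⟩ ht hs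
    simpa only [IccExtend_of_mem _ _ hs', domRestrict_apply] using hlim s hs'

end WeakCompactness

section ReachableSets

variable {ι E : Type*} [Fintype ι] [NormedAddCommGroup E] [NormedSpace ℝ E] {Y : ι → E → E}
  {r u : ℝ} {K Ω : Set E} {x : E}

lemma dual_integral_controlField [CompleteSpace E] {b : ℝ → ι → ℝ} {g : ℝ → E}
    (hb : IsBoundedControl r b) (hY : ∀ l, ContinuousOn (Y l) K) {s t : ℝ}
    (hg : ContinuousOn g (uIcc s t)) (hgK : MapsTo g (uIcc s t) K) (ψ : StrongDual ℝ E) :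
    ψ (∫ σ in s..t, controlField Y b σ (g σ)) = ∑ l, ∫ σ in s..t, ψ (Y l (g σ)) * b σ l := by
  have hinteg : ∀ l, IntervalIntegrable (fun σ => ψ (Y l (g σ)) * b σ l) volume s t := fun l => by
    simpa only [smul_eq_mul, mul_comm, Function.comp_apply] using
      hb.intervalIntegrable_smul l (ψ.continuous.comp_continuousOn ((hY l).comp hg hgK))
  rw [← ψ.intervalIntegral_comp_comm (hb.intervalIntegrable_controlField hY hg hgK),
    ← intervalIntegral.integral_finsetSum fun l _ => hinteg l]
  simp only [controlField, map_sum, map_smul, smul_eq_mul, mul_comm]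

lemma tendsto_integral_mul_control {b : ℕ → ℝ → ι → ℝ} {β : ℝ → ι → ℝ} {f : ℕ → ℝ → ℝ}
    {f₀ : ℝ → ℝ} {C t : ℝ} {l : ι} (hb : ∀ N, IsBoundedControl r (b N))
    (hf : ∀ N, ContinuousOn (f N) (uIcc 0 t)) (hf₀ : ContinuousOn f₀ (uIcc 0 t))
    (hC : ∀ N, ∀ s ∈ uIcc 0 t, |f N s| ≤ C)
    (hff₀ : ∀ s ∈ uIcc 0 t, Tendsto (fun N => f N s) atTop (𝓝 (f₀ s)))
    (hβ : Tendsto (fun N => ∫ s in (0 : ℝ)..t, f₀ s * b N s l) atTop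
      (𝓝 (∫ s in (0 : ℝ)..t, f₀ s * β s l))) :
    Tendsto (fun N => ∫ s in (0 : ℝ)..t, f N s * b N s l) atTop
      (𝓝 (∫ s in (0 : ℝ)..t, f₀ s * β s l)) := by
  have hinteg : ∀ N f, ContinuousOn f (uIcc 0 t) →
      IntervalIntegrable (fun s => f s * b N s l) volume 0 t := fun N f hf => by
    simpa only [smul_eq_mul, mul_comm] using (hb N).intervalIntegrable_smul l hf
  have hC₀ : ∀ s ∈ uIcc 0 t, |f₀ s| ≤ C := fun s hs =>
    le_of_tendsto' (hff₀ s hs).abs fun N => hC N s hs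
  have hdiff : Tendsto (fun N => ∫ s in (0 : ℝ)..t, (f N s - f₀ s) * b N s l) atTop (𝓝 0) := by
    suffices h : Tendsto (fun N => ∫ s in (0 : ℝ)..t, (f N s - f₀ s) * b N s l) atTop
        (𝓝 (∫ _ in (0 : ℝ)..t, (0 : ℝ))) by
      simpa only [intervalIntegral.integral_zero] using h
    refine intervalIntegral.tendsto_integral_filter_of_dominated_convergence
      (fun _ => (C + C) * √r) (.of_forall fun N => ?_) (.of_forall fun N => ?_)
      intervalIntegrable_const (ae_of_all _ fun s hs => ?_)
    · exact (intervalIntegrable_iff.1 (hinteg N _ ((hf N).sub hf₀))).aestronglyMeasurable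
    · refine ae_of_all _ fun s hs => ?_
      have hs' := uIoc_subset_uIcc hs
      rw [norm_mul, Real.norm_eq_abs, Real.norm_eq_abs]
      exact mul_le_mul ((abs_sub _ _).trans (add_le_add (hC N s hs') (hC₀ s hs')))
        ((hb N).abs_le s l) (abs_nonneg _) (add_nonneg ((abs_nonneg _).trans (hC₀ s hs'))
          ((abs_nonneg _).trans (hC₀ s hs')))
    · refine Tendsto.zero_mul_isBoundedUnder_le ?_
        (isBoundedUnder_of ⟨√r, fun N => (hb N).abs_le s l⟩)
      simpa using (hff₀ s (uIoc_subset_uIcc hs)).sub_const (f₀ s)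
  have hsum := hdiff.add hβ
  rw [zero_add] at hsum
  refine hsum.congr fun N => ?_
  rw [← intervalIntegral.integral_add (hinteg N (fun s => f N s - f₀ s) ((hf N).sub hf₀))
    (hinteg N _ hf₀)]
  simp only [← add_mul, sub_add_cancel]

lemma tendsto_dual_integral_controlField [CompleteSpace E] {b : ℕ → ℝ → ι → ℝ} {β : ℝ → ι → ℝ}
    {g : ℕ → ℝ → E} {g₀ : ℝ → E} {M : ℝ≥0} {t : ℝ} (hK : IsCompact K)
    (hY : ∀ l, LocallyLipschitzOn K (Y l)) (hb : ∀ N, IsBoundedControl r (b N))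
    (hβ : IsBoundedControl r β) (hg : ∀ N, ContinuousOn (g N) (uIcc 0 t))
    (hgK : ∀ N, MapsTo (g N) (uIcc 0 t) K) (hg₀ : LipschitzOnWith M g₀ (uIcc 0 t))
    (hlim : ∀ s ∈ uIcc 0 t, Tendsto (fun N => g N s) atTop (𝓝 (g₀ s)))
    (hweak : ∀ f : ℝ → ℝ, AbsolutelyContinuousOnInterval f 0 t → ∀ l,
      Tendsto (fun N => ∫ s in (0 : ℝ)..t, f s * b N s l) atTop
        (𝓝 (∫ s in (0 : ℝ)..t, f s * β s l))) (ψ : StrongDual ℝ E) :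
    Tendsto (fun N => ψ (∫ s in (0 : ℝ)..t, controlField Y (b N) s (g N s))) atTop
      (𝓝 (ψ (∫ s in (0 : ℝ)..t, controlField Y β s (g₀ s)))) := by
  have hYc : ∀ l, ContinuousOn (Y l) K := fun l => (hY l).continuousOn
  have hg₀K : MapsTo g₀ (uIcc 0 t) K := fun s hs =>
    hK.isClosed.mem_of_tendsto (hlim s hs) (.of_forall fun N => hgK N hs)
  simp only [dual_integral_controlField (hb _) hYc (hg _) (hgK _),
    dual_integral_controlField hβ hYc hg₀.continuousOn hg₀K]
  refine tendsto_finsetSum _ fun l _ => ?_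
  have hψY : ContinuousOn (fun z => ψ (Y l z)) K := ψ.continuous.comp_continuousOn (hYc l)
  obtain ⟨C, hC⟩ := hK.exists_bound_of_continuousOn hψY
  obtain ⟨L, hL⟩ := (hY l).exists_lipschitzOnWith_of_compact hK
  refine tendsto_integral_mul_control hb (fun N => hψY.comp (hg N) (hgK N))
    (hψY.comp hg₀.continuousOn hg₀K) (fun N s hs => hC _ (hgK N hs)) (fun s hs => ?_)
    (hweak _ (ψ.lipschitz.comp_lipschitzOnWith
      (hL.comp hg₀ hg₀K)).absolutelyContinuousOnInterval l)
  exact (hψY _ (hg₀K hs)).tendsto.comp (tendsto_nhdsWithin_iff.2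
    ⟨hlim s hs, .of_forall fun N => hgK N hs⟩)

lemma exists_subseq_tendsto_isTrajectory [CompleteSpace E] {b : ℕ → ℝ → ι → ℝ} {g : ℕ → ℝ → E}
    (hu : 0 ≤ u) (hK : IsCompact K) (hY : ∀ l, LocallyLipschitzOn K (Y l))
    (hb : ∀ N, IsBoundedControl r (b N))
    (hg : ∀ N, IsTrajectory (controlField Y (b N)) K x u (g N)) :
    ∃ φ : ℕ → ℕ, StrictMono φ ∧ ∃ β g₀, IsBoundedControl r β ∧
      IsTrajectory (controlField Y β) K x u g₀ ∧
      ∀ t ∈ Icc 0 u, Tendsto (fun k => g (φ k) t) atTop (𝓝 (g₀ t)) := by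
  have hYc : ∀ l, ContinuousOn (Y l) K := fun l => (hY l).continuousOn
  obtain ⟨M, hM⟩ := exists_norm_controlField_le hK hYc r
  obtain ⟨φ₁, hφ₁, g₀, hg₀, hlim₁⟩ := exists_subseq_tendsto_of_lipschitzOnWith isCompact_Icc hK
    (fun N => (hg N).lipschitzOnWith (hM _ (hb N))) fun N => (hg N).mapsTo
  obtain ⟨φ₂, hφ₂, β, hβ, hweak⟩ := exists_subseq_tendsto_integral_control (fun k => hb (φ₁ k)) hu
  have hlim : ∀ t ∈ Icc 0 u, Tendsto (fun k => g (φ₁ (φ₂ k)) t) atTop (𝓝 (g₀ t)) := fun t ht =>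
    (hlim₁ t ht).comp hφ₂.tendsto_atTop
  have hg₀K : MapsTo g₀ (Icc 0 u) K := fun t ht =>
    hK.isClosed.mem_of_tendsto (hlim t ht) (.of_forall fun k => (hg _).mapsTo ht)
  refine ⟨φ₁ ∘ φ₂, hφ₁.comp hφ₂, β, g₀, hβ, ⟨?_, hg₀K, fun t ht => ?_⟩, hlim⟩
  · rw [← uIcc_of_le hu] at hg₀ hg₀K
    exact hβ.intervalIntegrable_controlField hYc hg₀.continuousOn hg₀K
  have hsub : uIcc 0 t ⊆ Icc 0 u := uIcc_subset_Icc ⟨le_rfl, hu⟩ ht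
  refine (SeparatingDual.eq_iff_forall_dual_eq (R := ℝ)).2 fun ψ => ?_
  refine tendsto_nhds_unique ((ψ.continuous.tendsto _).comp (hlim t ht)) ?_
  rw [map_add]
  refine ((tendsto_dual_integral_controlField hK hY (fun k => hb (φ₁ (φ₂ k))) hβ
    (fun k => (hg _).continuousOn.mono hsub) (fun k => (hg _).mapsTo.mono_left hsub)
    (hg₀.mono hsub) (fun s hs => hlim s (hsub hs)) (fun f hf => hweak f t ht hf) ψ).const_add
    (ψ x)).congr fun k => ?_
  rw [Function.comp_apply, (hg _).eq_add_integral t ht, map_add]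

/-- The set of points reached from `x` in unit time, inside `Ω`, by driving the vector fields `Y`
with controls in the Euclidean ball of squared radius `r`. -/
def reachableSet (Y : ι → E → E) (Ω : Set E) (r : ℝ) (x : E) : Set E :=
  {z | ∃ b g, IsBoundedControl r b ∧ IsTrajectory (controlField Y b) Ω x 1 g ∧ g 1 = z}

lemma mem_reachableSet_self (hr : 0 ≤ r) (hx : x ∈ Ω) : x ∈ reachableSet Y Ω r x :=
  ⟨0, fun _ => x, .zero hr, ⟨by simp [controlField], fun _ _ => hx, by simp [controlField]⟩, rfl⟩

lemma reachableSet_mono (hK : K ⊆ Ω) : reachableSet Y K r x ⊆ reachableSet Y Ω r x := by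
  rintro z ⟨b, g, hb, hg, hz⟩
  exact ⟨b, g, hb, hg.mono hK, hz⟩

lemma IsTrajectory.mem_reachableSet {b : ℝ → ι → ℝ} {g : ℝ → E} {t : ℝ}
    (hb : IsBoundedControl r b) (ht : t ∈ Icc 0 1)
    (hg : IsTrajectory (controlField Y b) Ω x t g) : g t ∈ reachableSet Y Ω r x := by
  refine ⟨_, _, hb.ite (p := (· ≤ t)) measurableSet_Iic, (hg.extend_const ht).congr zero_le_one
    (fun _ _ => rfl) fun s _ => ?_, by simp only [min_eq_right ht.2]⟩
  simp only [controlField, ite_apply, ite_smul, Pi.zero_apply, zero_smul]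
  split_ifs <;> simp

lemma isClosed_reachableSet [CompleteSpace E] (hK : IsCompact K)
    (hY : ∀ l, LocallyLipschitzOn K (Y l)) : IsClosed (reachableSet Y K r x) := by
  refine IsSeqClosed.isClosed fun z z₀ hz hlim => ?_
  choose b g hb hg hgz using hz
  obtain ⟨φ, hφ, β, g₀, hβ, hg₀, hgg₀⟩ :=
    exists_subseq_tendsto_isTrajectory zero_le_one hK hY hb hg
  refine ⟨β, g₀, hβ, hg₀, tendsto_nhds_unique (hgg₀ 1 ⟨zero_le_one, le_rfl⟩) ?_⟩
  exact (hlim.comp hφ.tendsto_atTop).congr fun k => (hgz _).symm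

end ReachableSets

section Peano

variable {ι E : Type*} [Fintype ι] [NormedAddCommGroup E] [NormedSpace ℝ E] {V : ι → E → E}
  {b : ℝ → ι → ℝ} {r u : ℝ} {K : Set E}

lemma exists_isTrajectory_delay (hb : IsBoundedControl r b) (hV : ∀ i, Continuous (V i)) (x : E)
    {η : ℝ} (hη : 0 < η) (k : ℕ) : ∃ g : ℝ → E, Continuous g ∧
      IsTrajectory (fun s _ => controlField V b s (g (max (s - η) 0))) univ x (k * η) g := by
  have hinteg : ∀ g : ℝ → E, Continuous g → ∀ s t,
      IntervalIntegrable (fun s => controlField V b s (g (max (s - η) 0))) volume s t :=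
    fun g hg s t => hb.intervalIntegrable_controlField (K := univ) (fun i => (hV i).continuousOn)
      (by fun_prop) (mapsTo_univ _ _)
  induction k with
  | zero =>
    refine ⟨fun _ => x, continuous_const, hinteg _ continuous_const _ _, mapsTo_univ _ _,
      fun t ht => ?_⟩
    have ht₀ : t = 0 := le_antisymm (by simpa using ht.2) ht.1
    simp [ht₀]
  | succ k ih =>
    obtain ⟨g, hg, hgk⟩ := ih
    have hTg : Continuous fun t =>
        x + ∫ s in (0 : ℝ)..t, controlField V b s (g (max (s - η) 0)) :=
      continuous_const.add (intervalIntegral.continuous_primitive (hinteg g hg) 0)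
    refine ⟨_, hTg, hinteg _ hTg _ _, mapsTo_univ _ _, fun t ht =>
      congrArg (x + ·) (intervalIntegral.integral_congr fun s hs => ?_)⟩
    rw [uIcc_of_le ht.1] at hs
    have hle : s - η ≤ k * η := by
      have := hs.2.trans ht.2
      push_cast at this
      linarith
    exact congrArg (controlField V b s)
      (hgk.eq_add_integral _ ⟨le_max_right _ _, max_le hle (by positivity)⟩)

lemma tendsto_apply_delay {X : Type*} [PseudoMetricSpace X] {g : ℕ → ℝ → X}
    {g₀ : ℝ → X} {M : ℝ≥0} {η : ℕ → ℝ} {u : ℝ}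
    (hg : ∀ N, LipschitzOnWith M (g N) (Icc 0 u)) (hη₀ : ∀ N, 0 ≤ η N)
    (hη : Tendsto η atTop (𝓝 0)) {s : ℝ} (hs : s ∈ Icc 0 u)
    (hlim : Tendsto (fun N => g N s) atTop (𝓝 (g₀ s))) :
    Tendsto (fun N => g N (max (s - η N) 0)) atTop (𝓝 (g₀ s)) := by
  refine tendsto_of_tendsto_of_dist hlim (squeeze_zero (fun _ => dist_nonneg) (fun N => ?_)
    (by simpa using hη.const_mul (M : ℝ)))
  have hmem : max (s - η N) 0 ∈ Icc 0 u :=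
    ⟨le_max_right _ _, max_le (by linarith [hs.2, hη₀ N]) (hs.1.trans hs.2)⟩
  refine ((hg N).dist_le_mul s hs _ hmem).trans (mul_le_mul_of_nonneg_left ?_ M.2)
  rw [Real.dist_eq, abs_le]
  constructor
  · linarith [hη₀ N, max_le (show s - η N ≤ s by linarith [hη₀ N]) hs.1]
  · linarith [le_max_left (s - η N) 0]

lemma exists_isTrajectory_of_bounded [ProperSpace E] (hb : IsBoundedControl r b)
    (hV : ∀ i, Continuous (V i)) {C : ι → ℝ} (hC : ∀ i z, ‖V i z‖ ≤ C i) (hu : 0 ≤ u) (x : E) :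
    ∃ g, IsTrajectory (controlField V b) univ x u g := by
  let M : ℝ≥0 := (∑ i, √r * C i).toNNReal
  have hM : ∀ t z, ‖controlField V b t z‖ ≤ M := fun t z =>
    (hb.norm_controlField_le (fun i => hC i z) t).trans (Real.le_coe_toNNReal _)
  let η : ℕ → ℝ := fun N => 1 / (N + 1)
  have hη₀ : ∀ N, 0 < η N := fun N => Nat.one_div_pos_of_nat
  have hdelay : ∀ N, ∃ g : ℝ → E,
      IsTrajectory (fun s _ => controlField V b s (g (max (s - η N) 0))) univ x u g := fun N => by
    obtain ⟨k, hk⟩ := exists_nat_ge (u / η N)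
    obtain ⟨g, -, hg⟩ := exists_isTrajectory_delay hb hV x (hη₀ N) k
    exact ⟨g, hg.restrict ⟨hu, (div_le_iff₀ (hη₀ N)).1 hk⟩⟩
  choose g hg using hdelay
  have hlip : ∀ N, LipschitzOnWith M (g N) (Icc 0 u) := fun N =>
    (hg N).lipschitzOnWith fun _ _ _ => hM _ _
  have hball : ∀ N, MapsTo (g N) (Icc 0 u) (closedBall x (M * u)) := fun N t ht => by
    rw [mem_closedBall, ← (hg N).apply_zero hu]
    refine ((hlip N).dist_le_mul t ht 0 ⟨le_rfl, hu⟩).trans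
      (mul_le_mul_of_nonneg_left ?_ M.2)
    rw [Real.dist_0_eq_abs, abs_of_nonneg ht.1]
    exact ht.2
  obtain ⟨φ, hφ, g₀, hg₀, hlim⟩ := exists_subseq_tendsto_of_lipschitzOnWith isCompact_Icc
    (isCompact_closedBall _ _) hlip hball
  refine ⟨g₀, hb.intervalIntegrable_controlField (fun i => (hV i).continuousOn)
    (uIcc_of_le hu ▸ hg₀.continuousOn) (mapsTo_univ _ _), mapsTo_univ _ _, fun t ht =>
    tendsto_nhds_unique (hlim t ht) ?_⟩
  have h₀ : (0 : ℝ) ∈ Icc 0 u := ⟨le_rfl, hu⟩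
  simp only [(hg _).eq_add_integral t ht]
  refine tendsto_const_nhds.add
    (intervalIntegral.tendsto_integral_filter_of_dominated_convergence (fun _ => (M : ℝ))
      (.of_forall fun k => (intervalIntegrable_iff.1
        ((hg (φ k)).intervalIntegrable_of_mem h₀ ht)).aestronglyMeasurable)
      (.of_forall fun k => ae_of_all _ fun s _ => hM _ _) intervalIntegrable_const
      (ae_of_all _ fun s hs => tendsto_finsetSum _ fun i _ => ?_))
  have hs' : s ∈ Icc 0 u := uIcc_subset_Icc h₀ ht (uIoc_subset_uIcc hs)
  exact (((hV i).tendsto _).comp (tendsto_apply_delay (fun k => hlip (φ k))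
    (fun k => (hη₀ (φ k)).le) (tendsto_one_div_add_atTop_nhds_zero_nat.comp hφ.tendsto_atTop)
    hs' (hlim s hs'))).const_smul _

lemma exists_isTrajectory_of_mapsTo [FiniteDimensional ℝ E] (hK : IsCompact K)
    (hV : ∀ i, ContinuousOn (V i) K) (hb : IsBoundedControl r b) (hu : 0 ≤ u) (x : E) :
    ∃ h, ContinuousOn h (Icc 0 u) ∧ h 0 = x ∧ ∀ t ∈ Icc 0 u, MapsTo h (Icc 0 t) K →
      IsTrajectory (controlField V b) K x t h := by
  have : ProperSpace E := FiniteDimensional.proper ℝ E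
  have : CompactSpace K := isCompact_iff_compactSpace.1 hK
  choose W hWV using fun i => BoundedContinuousFunction.exists_norm_eq_domRestrict_eq hK.isClosed ℝ
    (BoundedContinuousFunction.mkOfCompact ⟨K.domRestrict (V i), (hV i).domRestrict⟩)
  have hWV' : ∀ i, ∀ z ∈ K, W i z = V i z := fun i z hz =>
    DFunLike.congr_fun (hWV i).2 ⟨z, hz⟩
  obtain ⟨h, hh⟩ := exists_isTrajectory_of_bounded hb (fun i => (W i).continuous)
    (fun i => (W i).norm_coe_le_norm) hu x
  refine ⟨h, hh.continuousOn, hh.apply_zero hu, fun t ht hhK => ?_⟩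
  refine ((hh.restrict ht).codRestrict hhK).congr ht.1 (fun _ _ => rfl) fun s hs => ?_
  simp only [controlField, hWV' _ _ (hhK (Ioo_subset_Icc_self hs))]

end Peano

section MaximalTrajectories

variable {κ E : Type*} [Fintype κ] [NormedAddCommGroup E] [NormedSpace ℝ E] {W : κ → E → E}
  {a : ℝ → κ → ℝ} {r u v : ℝ} {F : ℝ → E → E} {K Ω : Set E} {x : E} {γ h : ℝ → E}

lemma IsTrajectory.exists_compact_nhd [LocallyCompactSpace E] (hγ : IsTrajectory F Ω x u γ)
    (hΩ : IsOpen Ω) : ∃ K, IsCompact K ∧ K ⊆ Ω ∧ MapsTo γ (Icc 0 u) (interior K) := by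
  obtain ⟨K, hK, hγK, hKΩ⟩ := exists_compact_between
    (isCompact_Icc.image_of_continuousOn hγ.continuousOn) hΩ hγ.mapsTo.image_subset
  exact ⟨K, hK, hKΩ, mapsTo_iff_image_subset.2 hγK⟩

lemma IsTrajectory.eqOn_of_trajectory_in_nhd (hγ : IsTrajectory (controlField W a) Ω x u γ)
    (ha : IsBoundedControl r a) (hW : ∀ i, LocallyLipschitzOn Ω (W i)) (hu : 0 ≤ u) (hKΩ : K ⊆ Ω)
    (hγK : MapsTo γ (Icc 0 u) (interior K)) (hh : ContinuousOn h (Icc 0 u)) (hh₀ : h 0 = x)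
    (hhK : ∀ t ∈ Icc 0 u, MapsTo h (Icc 0 t) K → IsTrajectory (controlField W a) K x t h) :
    EqOn h γ (Icc 0 u) := by
  have heq : ∀ t ∈ Icc 0 u, MapsTo h (Icc 0 t) K → EqOn h γ (Icc 0 t) := fun t ht hmaps =>
    ((hhK t ht hmaps).mono hKΩ).eqOn_of_locallyLipschitzOn (hγ.restrict ht) ha hW
  suffices hinteg : MapsTo h (Icc 0 u) (interior K) from
    heq u ⟨hu, le_rfl⟩ (hinteg.mono_right interior_subset)
  -- At the first time `h` leaves the interior of `K` it still agrees with `γ`, which never leaves.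
  by_contra hexit
  have hclosed : IsCompact (Icc 0 u ∩ h ⁻¹' (interior K)ᶜ) :=
    isCompact_Icc.of_isClosed_subset
      (hh.preimage_isClosed_of_isClosed isClosed_Icc isOpen_interior.isClosed_compl)
      inter_subset_left
  obtain ⟨v, ⟨hv, hvK⟩, hvleast⟩ := hclosed.exists_isLeast <| by
    simpa only [MapsTo, not_forall, exists_prop, Set.Nonempty, mem_inter_iff, mem_preimage,
      mem_compl_iff] using hexit
  have hbefore : ∀ t ∈ Ico 0 v, h t ∈ interior K := fun t ht => by
    by_contra htK
    exact (hvleast ⟨⟨ht.1, ht.2.le.trans hv.2⟩, htK⟩).not_gt ht.2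
  have hv₀ : 0 ≠ v := by
    rintro rfl
    exact hvK (by simpa only [hh₀, hγ.apply_zero hu] using hγK ⟨le_rfl, hu⟩)
  have heqv : EqOn h γ (Icc 0 v) := by
    have hIco : EqOn h γ (Ico 0 v) := fun t ht =>
      heq t ⟨ht.1, ht.2.le.trans hv.2⟩ (fun s hs =>
        interior_subset (hbefore s ⟨hs.1, hs.2.trans_lt ht.2⟩)) ⟨ht.1, le_rfl⟩
    have hsub : Icc 0 v ⊆ Icc 0 u := Icc_subset_Icc_right hv.2
    exact hIco.of_subset_closure (hh.mono hsub) (hγ.continuousOn.mono hsub) Ico_subset_Icc_self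
      (closure_Ico hv₀).ge
  exact hvK (heqv ⟨hv.1, le_rfl⟩ ▸ hγK hv)

lemma IsTrajectory.exists_gt [FiniteDimensional ℝ E]
    (hγ : IsTrajectory (controlField W a) Ω x u γ) (hΩ : IsOpen Ω) (ha : IsBoundedControl r a)
    (hW : ∀ i, LocallyLipschitzOn Ω (W i)) (hu : 0 ≤ u) :
    ∃ v > u, ∃ h, IsTrajectory (controlField W a) Ω x v h := by
  have : ProperSpace E := FiniteDimensional.proper ℝ E
  obtain ⟨K, hK, hKΩ, hγK⟩ := hγ.exists_compact_nhd hΩ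
  have hu₁ : Icc 0 u ⊆ Icc 0 (u + 1) := Icc_subset_Icc_right (by linarith)
  obtain ⟨h, hh, hh₀, hhK⟩ := exists_isTrajectory_of_mapsTo hK
    (fun i => (hW i).continuousOn.mono hKΩ) ha (by linarith : 0 ≤ u + 1) x
  have heq : EqOn h γ (Icc 0 u) := hγ.eqOn_of_trajectory_in_nhd ha hW hu hKΩ hγK (hh.mono hu₁) hh₀
    fun t ht => hhK t (hu₁ ht)
  have hnhd : ∀ᶠ t in 𝓝[>] u, h t ∈ interior K :=
    ((hh u ⟨hu, by linarith⟩).mono_of_mem_nhdsWithin (mem_of_superset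
      (Ioc_mem_nhdsGT (by linarith : u < u + 1)) fun t ht => ⟨hu.trans ht.1.le, ht.2⟩))
      (isOpen_interior.mem_nhds (heq ⟨hu, le_rfl⟩ ▸ hγK ⟨hu, le_rfl⟩))
  obtain ⟨w, hw, hwK⟩ := mem_nhdsGT_iff_exists_Ioc_subset.1 hnhd
  have huv : u < min w (u + 1) := lt_min hw (by linarith)
  refine ⟨min w (u + 1), huv, h,
    (hhK _ ⟨hu.trans huv.le, min_le_right _ _⟩ fun t ht => ?_).mono hKΩ⟩
  rcases le_or_gt t u with htu | hut
  · exact heq ⟨ht.1, htu⟩ ▸ interior_subset (hγK ⟨ht.1, htu⟩)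
  · exact interior_subset (hwK ⟨hut, ht.2.trans (min_le_left _ _)⟩)

lemma exists_isTrajectory_Ico (ha : IsBoundedControl r a)
    (hW : ∀ i, LocallyLipschitzOn Ω (W i))
    (hγ : ∀ t ∈ Ico 0 v, ∃ γ, IsTrajectory (controlField W a) Ω x t γ) :
    ∃ γ, ∀ t ∈ Ico 0 v, IsTrajectory (controlField W a) Ω x t γ := by
  choose! G hG using hγ
  have heq : ∀ t ∈ Ico 0 v, EqOn (G t) (fun s => G s s) (Icc 0 t) := fun t ht s hs =>
    ((hG t ht).restrict hs).eqOn_of_locallyLipschitzOn (hG s ⟨hs.1, hs.2.trans_lt ht.2⟩) ha hW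
      ⟨hs.1, le_rfl⟩
  exact ⟨fun t => G t t, fun t ht => (hG t ht).congr ht.1 (heq t ht) fun s hs =>
    congrArg _ (heq t ht (Ioo_subset_Icc_self hs))⟩

lemma exists_isTrajectory_or_maximal [FiniteDimensional ℝ E] (hΩ : IsOpen Ω)
    (ha : IsBoundedControl r a) (hW : ∀ i, LocallyLipschitzOn Ω (W i)) (hx : x ∈ Ω)
    (hu : 0 ≤ u) :
    (∃ γ, IsTrajectory (controlField W a) Ω x u γ) ∨
      ∃ v ∈ Ioc 0 u, (∃ γ, ∀ t ∈ Ico 0 v, IsTrajectory (controlField W a) Ω x t γ) ∧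
        ¬∃ γ, IsTrajectory (controlField W a) Ω x v γ := by
  rw [or_iff_not_imp_left]
  intro hmax
  let S := {t ∈ Icc 0 u | ∃ γ, IsTrajectory (controlField W a) Ω x t γ}
  have hS₀ : 0 ∈ S := ⟨⟨le_rfl, hu⟩, fun _ => x, by simp, fun _ _ => hx, fun t ht => by
    simp [le_antisymm ht.2 ht.1]⟩
  have hSu : BddAbove S := ⟨u, fun t ht => ht.1.2⟩
  have hSv : sSup S ∈ Icc 0 u := ⟨le_csSup hSu hS₀, csSup_le ⟨0, hS₀⟩ fun t ht => ht.1.2⟩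
  have hnot : ¬∃ γ, IsTrajectory (controlField W a) Ω x (sSup S) γ := by
    rintro ⟨γ, hγ⟩
    obtain ⟨w, hw, h, hh⟩ := hγ.exists_gt hΩ ha hW hSv.1
    have hSlt : sSup S < u := hSv.2.lt_of_ne fun heq => hmax ⟨γ, heq ▸ hγ⟩
    have hlt : sSup S < min w u := lt_min hw hSlt
    exact hlt.not_ge (le_csSup hSu ⟨⟨hSv.1.trans hlt.le, min_le_right _ _⟩, h,
      hh.restrict ⟨hSv.1.trans hlt.le, min_le_left _ _⟩⟩)
  refine ⟨sSup S, ⟨hSv.1.lt_of_ne fun heq => hnot (heq ▸ hS₀.2), hSv.2⟩,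
    exists_isTrajectory_Ico ha hW fun t ht => ?_, hnot⟩
  obtain ⟨s, ⟨-, γ, hγ⟩, hts⟩ := exists_lt_of_lt_csSup ⟨0, hS₀⟩ ht.2
  exact ⟨γ, hγ.restrict ⟨ht.1, hts.le⟩⟩

lemma exists_isTrajectory_of_Ico (hγ : ∀ t ∈ Ico 0 v, IsTrajectory F Ω x t γ) (hv : 0 ≤ v)
    (hinteg : IntervalIntegrable (fun s => F s (γ s)) volume 0 v)
    (hmem : x + ∫ s in (0 : ℝ)..v, F s (γ s) ∈ Ω) : ∃ g, IsTrajectory F Ω x v g := by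
  have heq : ∀ t ∈ Ico 0 v, γ t = x + ∫ s in (0 : ℝ)..t, F s (γ s) := fun t ht =>
    (hγ t ht).eq_add_integral t ⟨ht.1, le_rfl⟩
  have hmaps : MapsTo (fun t => x + ∫ s in (0 : ℝ)..t, F s (γ s)) (Icc 0 v) Ω := fun t ht => by
    rcases ht.2.eq_or_lt with rfl | htv
    · exact hmem
    · simpa only [heq t ⟨ht.1, htv⟩] using (hγ t ⟨ht.1, htv⟩).mapsTo ⟨ht.1, le_rfl⟩
  have hF : ∀ t ∈ Ioo 0 v, F t (γ t) = F t (x + ∫ s in (0 : ℝ)..t, F s (γ s)) := fun t ht =>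
    congrArg (F t) (heq t ⟨ht.1.le, ht.2⟩)
  refine ⟨_, hinteg.congr_uIoo fun t ht => hF t (uIoo_of_le hv ▸ ht), hmaps, fun t ht =>
    congrArg (x + ·) (intervalIntegral.integral_congr_Ioo_of_le ht.1 fun s hs =>
      hF s ⟨hs.1, hs.2.trans_le ht.2⟩)⟩

end MaximalTrajectories

section Feedback

variable {ι κ E : Type*} [Fintype ι] [NormedAddCommGroup E] [NormedSpace ℝ E]
  {Y : ι → E → E} {W : κ → E → E} {a : ℝ → κ → ℝ} {e : κ → ι → E → ℝ} {k : κ → ι → ℝ}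
  {S S' Ω : Set E} {r u : ℝ} {x : E} {γ : ℝ → E}

/-- On `S` the vector fields `W` are combinations of the vector fields `Y`, with continuous
coefficients `e` bounded by the constants `k`. -/
structure IsCombinationOn (Y : ι → E → E) (W : κ → E → E) (e : κ → ι → E → ℝ) (k : κ → ι → ℝ)
    (S : Set E) : Prop where
  eq_sum : ∀ i, ∀ z ∈ S, W i z = ∑ l, e i l z • Y l z
  continuousOn : ∀ i l, ContinuousOn (e i l) S
  abs_le : ∀ i l, ∀ z ∈ S, |e i l z| ≤ k i l

lemma IsCombinationOn.mono (he : IsCombinationOn Y W e k S) (hS : S' ⊆ S) :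
    IsCombinationOn Y W e k S' where
  eq_sum i z hz := he.eq_sum i z (hS hz)
  continuousOn i l := (he.continuousOn i l).mono hS
  abs_le i l z hz := he.abs_le i l z (hS hz)

lemma exists_continuous_eqOn_abs_le {X : Type*} [TopologicalSpace X] [NormalSpace X] {S : Set X}
    (hS : IsClosed S) (hne : S.Nonempty) {f : X → ℝ} {C : ℝ} (hf : ContinuousOn f S)
    (hC : ∀ z ∈ S, |f z| ≤ C) : ∃ g : X → ℝ, Continuous g ∧ (∀ z, |g z| ≤ C) ∧ EqOn g f S := by
  obtain ⟨z, hz⟩ := hne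
  have hC₀ : (Icc (-C) C).Nonempty := ⟨f z, abs_le.1 (hC z hz)⟩
  obtain ⟨g, hg, hgf⟩ := ContinuousMap.exists_restrict_eq_forall_mem_of_closed
    ⟨S.domRestrict f, hf.domRestrict⟩ (fun z => abs_le.1 (hC z z.2)) hC₀ hS
  exact ⟨g, g.continuous, fun z => abs_le.2 (hg z), fun z hz => DFunLike.congr_fun hgf ⟨z, hz⟩⟩

lemma IsCombinationOn.exists_extension (he : IsCombinationOn Y W e k S) (hS : IsClosed S)
    (hne : S.Nonempty) : ∃ e' : κ → ι → E → ℝ, (∀ i l, EqOn (e' i l) (e i l) S) ∧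
      IsCombinationOn Y (fun i z => ∑ l, e' i l z • Y l z) e' k univ := by
  choose e' he' hk' hee' using fun i l =>
    exists_continuous_eqOn_abs_le hS hne (he.continuousOn i l) (he.abs_le i l)
  exact ⟨e', hee', fun _ _ _ => rfl, fun i l => (he' i l).continuousOn, fun i l z _ => hk' i l z⟩

variable [Fintype κ]

/-- The control of `Y` which imitates, along the curve `γ` and at times in `T`, the control `a` of
vector fields that are combinations of `Y` with coefficients `e`; it vanishes outside `T`. -/
def feedback (e : κ → ι → E → ℝ) (a : ℝ → κ → ℝ) (γ : ℝ → E) (T : Set ℝ) (s : ℝ) (l : ι) : ℝ :=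
  ∑ i, a s i * T.indicator (fun s => e i l (γ s)) s

lemma IsCombinationOn.controlField_feedback (he : IsCombinationOn Y W e k S) {T : Set ℝ}
    (hγ : MapsTo γ T S) {s : ℝ} (hs : s ∈ T) :
    controlField Y (feedback e a γ T) s (γ s) = controlField W a s (γ s) := by
  simp only [controlField, feedback, indicator_of_mem hs, he.eq_sum _ _ (hγ hs), Finset.smul_sum,
    Finset.sum_smul, mul_smul]
  exact Finset.sum_comm

lemma IsCombinationOn.isBoundedControl_feedback (he : IsCombinationOn Y W e k S)
    (hk : ∑ l, ∑ i, k i l ^ 2 ≤ r) (ha : IsBoundedControl 1 a) {T : Set ℝ}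
    (hT : MeasurableSet T) (hγ : ContinuousOn γ T) (hγS : MapsTo γ T S) :
    IsBoundedControl r (feedback e a γ T) where
  measurable l := by
    classical
    refine Finset.measurable_fun_sum _ fun i _ => (ha.measurable i).mul ?_
    rw [← piecewise_eq_indicator]
    exact ((he.continuousOn i l).comp hγ hγS).measurable_piecewise continuousOn_const hT
  sum_sq_le s := by
    refine (Finset.sum_le_sum fun l _ => (Finset.sum_mul_sq_le_sq_mul_sq _ _ _).trans <|
      (mul_le_of_le_one_left (Finset.sum_nonneg fun _ _ => sq_nonneg _) (ha.sum_sq_le s)).trans <|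
      Finset.sum_le_sum fun i _ => ?_).trans hk
    by_cases hs : s ∈ T
    · rw [indicator_of_mem hs]
      exact sq_le_sq.2 ((he.abs_le i l _ (hγS hs)).trans (le_abs_self _))
    · simpa [indicator_of_notMem hs] using sq_nonneg (k i l)

/- The Peano solution need not be a solution for `W`, since the extended coefficients say nothing
about `W` off the reachable set; but it is a trajectory of `Y`, hence never leaves that set. -/
lemma IsCombinationOn.exists_trajectory_in_reachableSet [FiniteDimensional ℝ E] {K : Set E}
    (he : IsCombinationOn Y W e k (reachableSet Y K r x)) (hk : ∑ l, ∑ i, k i l ^ 2 ≤ r)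
    (ha : IsBoundedControl 1 a) (hK : IsCompact K) (hY : ∀ l, LocallyLipschitzOn K (Y l))
    (hx : x ∈ K) (hu : u ∈ Icc 0 1) :
    ∃ h, ContinuousOn h (Icc 0 u) ∧ h 0 = x ∧ ∀ t ∈ Icc 0 u, MapsTo h (Icc 0 t) K →
      IsTrajectory (controlField W a) K x t h ∧ h t ∈ reachableSet Y K r x := by
  have : ProperSpace E := FiniteDimensional.proper ℝ E
  have hr : 0 ≤ r :=
    (Finset.sum_nonneg fun _ _ => Finset.sum_nonneg fun _ _ => sq_nonneg _).trans hk
  have hne : (reachableSet Y K r x).Nonempty := ⟨x, mem_reachableSet_self hr hx⟩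
  obtain ⟨e', hee', he'⟩ := he.exists_extension (isClosed_reachableSet hK hY) hne
  obtain ⟨h, hh, hh₀, hhK⟩ := exists_isTrajectory_of_mapsTo hK
    (V := fun i z => ∑ l, e' i l z • Y l z) (fun i => continuousOn_finsetSum _ fun l _ =>
      ((he'.continuousOn i l).mono (subset_univ K)).smul (hY l).continuousOn) ha hu.1 x
  have hreach : ∀ t ∈ Icc 0 u, MapsTo h (Icc 0 t) K → h t ∈ reachableSet Y K r x :=
    fun t ht hmaps => by
      have hb := he'.isBoundedControl_feedback hk ha measurableSet_Icc
        (hh.mono (Icc_subset_Icc_right ht.2)) (mapsTo_univ h _)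
      refine ((hhK t ht hmaps).congr ht.1 (fun _ _ => rfl) fun s hs => ?_).mem_reachableSet hb
        ⟨ht.1, ht.2.trans hu.2⟩
      exact (he'.controlField_feedback (mapsTo_univ _ _) (Ioo_subset_Icc_self hs)).symm
  refine ⟨h, hh, hh₀, fun t ht hmaps => ⟨?_, hreach t ht hmaps⟩⟩
  refine (hhK t ht hmaps).congr ht.1 (fun _ _ => rfl) fun s hs => ?_
  have hs' : h s ∈ reachableSet Y K r x := hreach s ⟨hs.1.le, hs.2.le.trans ht.2⟩
    (hmaps.mono_left (Icc_subset_Icc_right hs.2.le))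
  simp only [controlField, he.eq_sum _ _ hs', hee' _ _ hs']

lemma IsCombinationOn.mem_reachableSet [FiniteDimensional ℝ E] (hΩ : IsOpen Ω)
    (hY : ∀ l, LocallyLipschitzOn Ω (Y l)) (hW : ∀ i, LocallyLipschitzOn Ω (W i))
    (he : IsCombinationOn Y W e k (reachableSet Y Ω r x)) (hk : ∑ l, ∑ i, k i l ^ 2 ≤ r)
    (ha : IsBoundedControl 1 a) (hu : u ∈ Icc 0 1)
    (hγ : IsTrajectory (controlField W a) Ω x u γ) : γ u ∈ reachableSet Y Ω r x := by
  have : ProperSpace E := FiniteDimensional.proper ℝ E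
  obtain ⟨K, hK, hKΩ, hγK⟩ := hγ.exists_compact_nhd hΩ
  have hx : x ∈ K := hγ.apply_zero hu.1 ▸ interior_subset (hγK ⟨le_rfl, hu.1⟩)
  obtain ⟨h, hh, hh₀, hhK⟩ := (he.mono (reachableSet_mono hKΩ)).exists_trajectory_in_reachableSet
    hk ha hK (fun l => (hY l).mono hKΩ) hx hu
  have heq : EqOn h γ (Icc 0 u) := hγ.eqOn_of_trajectory_in_nhd ha hW hu.1 hKΩ hγK hh hh₀
    fun t ht hmaps => (hhK t ht hmaps).1
  have hmaps : MapsTo h (Icc 0 u) K := (hγK.mono_right interior_subset).congr heq.symm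
  exact heq ⟨hu.1, le_rfl⟩ ▸ reachableSet_mono hKΩ (hhK u ⟨hu.1, le_rfl⟩ hmaps).2

end Feedback

section WeakTrajectories

variable {E : Type*} [NormedAddCommGroup E] [NormedSpace ℝ E] {F G : ℝ → E → E} {Ω : Set E}
  {x : E} {g γ : ℝ → E} {u v : ℝ}

/-- `g` satisfies in `Ω` the integral equation of `F` on `[0, u]`, with no integrability assumption,
as in `SolvesODE`. If `F` is not integrable along `g` up to time `t`, the integral has the junk
value `0`, so that the equation only says `g t = x`. -/
structure IsWeakTrajectory (F : ℝ → E → E) (Ω : Set E) (x : E) (u : ℝ) (g : ℝ → E) : Prop where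
  mapsTo : MapsTo g (Icc 0 u) Ω
  eq_add_integral : ∀ t ∈ Icc 0 u, g t = x + ∫ s in (0 : ℝ)..t, F s (g s)

lemma IsTrajectory.isWeakTrajectory (hg : IsTrajectory F Ω x u g) : IsWeakTrajectory F Ω x u g :=
  ⟨hg.mapsTo, hg.eq_add_integral⟩

namespace IsWeakTrajectory

lemma isTrajectory (hg : IsWeakTrajectory F Ω x u g)
    (hinteg : IntervalIntegrable (fun s => F s (g s)) volume 0 u) : IsTrajectory F Ω x u g :=
  ⟨hinteg, hg.mapsTo, hg.eq_add_integral⟩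

lemma restrict (hg : IsWeakTrajectory F Ω x u g) (hv : v ≤ u) : IsWeakTrajectory F Ω x v g where
  mapsTo := hg.mapsTo.mono_left (Icc_subset_Icc_right hv)
  eq_add_integral t ht := hg.eq_add_integral t ⟨ht.1, ht.2.trans hv⟩

lemma congr_ae (hg : IsWeakTrajectory F Ω x u g)
    (hFG : ∀ᵐ s, s ∈ Icc 0 u → F s = G s) : IsWeakTrajectory G Ω x u g where
  mapsTo := hg.mapsTo
  eq_add_integral t ht := by
    rw [hg.eq_add_integral t ht]
    refine congrArg (x + ·) (intervalIntegral.integral_congr_ae ?_)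
    filter_upwards [hFG] with s hs hst
    rw [uIoc_of_le ht.1] at hst
    rw [hs ⟨hst.1.le, hst.2.trans ht.2⟩]

lemma eq_of_not_intervalIntegrable (hg : IsWeakTrajectory F Ω x u g) {t : ℝ} (ht : t ∈ Icc 0 u)
    (hinteg : ¬IntervalIntegrable (fun s => F s (g s)) volume 0 t) : g t = x := by
  rw [hg.eq_add_integral t ht, intervalIntegral.integral_undef hinteg, add_zero]

lemma eqOn (hg : IsWeakTrajectory F Ω x u g) (hγ : IsTrajectory F Ω x u γ)
    (huniq : ∀ t ∈ Icc 0 u, ∀ h, IsTrajectory F Ω x t h → EqOn h γ (Icc 0 t))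
    (hF : IntervalIntegrable (fun s => F s x) volume 0 u) : EqOn g γ (Icc 0 u) := by
  rcases lt_or_ge u 0 with hu | hu
  · simp [Icc_eq_empty_of_lt hu]
  let S := {t ∈ Icc 0 u | IntervalIntegrable (fun s => F s (g s)) volume 0 t}
  have hS₀ : 0 ∈ S := ⟨⟨le_rfl, hu⟩, .refl⟩
  have hSu : BddAbove S := ⟨u, fun t ht => ht.1.2⟩
  have hσ : sSup S ∈ Icc 0 u := ⟨le_csSup hSu hS₀, csSup_le ⟨0, hS₀⟩ fun t ht => ht.1.2⟩
  have heq : ∀ t ∈ S, EqOn g γ (Icc 0 t) := fun t ht =>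
    huniq t ht.1 g ((hg.restrict ht.1.2).isTrajectory ht.2)
  have hbefore : IntervalIntegrable (fun s => F s (g s)) volume 0 (sSup S) := by
    refine (hγ.restrict hσ).intervalIntegrable.congr_uIoo fun s hs => ?_
    rw [uIoo_of_le hσ.1] at hs
    obtain ⟨t, ht, hst⟩ := exists_lt_of_lt_csSup ⟨0, hS₀⟩ hs.2
    exact congrArg (F s) (heq t ht ⟨hs.1.le, hst.le⟩).symm
  -- After `sSup S` the integral is undefined, so `g` is constant there; but `F` is integrable along
  -- constant curves.
  have hafter : IntervalIntegrable (fun s => F s (g s)) volume (sSup S) u := by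
    refine (hF.mono_set ?_).congr_uIoo (a := sSup S) (b := u) fun s hs => ?_
    · rw [uIcc_of_le hσ.2, uIcc_of_le hu]
      exact Icc_subset_Icc_left hσ.1
    · rw [uIoo_of_le hσ.2] at hs
      have hs' : s ∈ Icc 0 u := ⟨hσ.1.trans hs.1.le, hs.2.le⟩
      rw [hg.eq_of_not_intervalIntegrable hs' fun hi => hs.1.not_ge (le_csSup hSu ⟨hs', hi⟩)]
  exact heq u ⟨⟨hu, le_rfl⟩, hbefore.trans hafter⟩

end IsWeakTrajectory

lemma isWeakTrajectory_of_not_intervalIntegrable (hx : x ∈ Ω)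
    (hγ : ∀ t ∈ Ico 0 v, IsTrajectory F Ω x t γ) (hv : 0 ≤ v)
    (hinteg : ¬IntervalIntegrable (fun s => F s (γ s)) volume 0 v) :
    IsWeakTrajectory F Ω x u (fun t => x + ∫ s in (0 : ℝ)..t, F s (γ s)) := by
  have heq : ∀ t ∈ Ico 0 v, γ t = x + ∫ s in (0 : ℝ)..t, F s (γ s) := fun t ht =>
    (hγ t ht).eq_add_integral t ⟨ht.1, le_rfl⟩
  have hF : ∀ t ∈ Ioo 0 v, F t (γ t) = F t (x + ∫ s in (0 : ℝ)..t, F s (γ s)) := fun t ht =>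
    congrArg (F t) (heq t ⟨ht.1.le, ht.2⟩)
  have hundef : ∀ f : ℝ → E, (∀ t ∈ Ioo 0 v, F t (γ t) = f t) → ∀ t ≥ v,
      ∫ s in (0 : ℝ)..t, f s = 0 := fun f hf t ht =>
    intervalIntegral.integral_undef fun hft => hinteg <| (hft.mono_set (by
      rw [uIcc_of_le hv, uIcc_of_le (hv.trans ht)]
      exact Icc_subset_Icc_right ht)).congr_uIoo (a := 0) (b := v) fun s hs =>
        (hf s (uIoo_of_le hv ▸ hs)).symm
  refine ⟨fun t ht => ?_, fun t ht => congrArg (x + ·) ?_⟩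
  · rcases lt_or_ge t v with htv | hvt
    · simpa only [heq t ⟨ht.1, htv⟩] using (hγ t ⟨ht.1, htv⟩).mapsTo ⟨ht.1, le_rfl⟩
    · simpa only [hundef _ (fun _ _ => rfl) t hvt, add_zero] using hx
  · rcases lt_or_ge t v with htv | hvt
    · exact intervalIntegral.integral_congr_Ioo_of_le ht.1 fun s hs => hF s ⟨hs.1, hs.2.trans htv⟩
    · exact (hundef _ (fun _ _ => rfl) t hvt).trans (hundef _ hF t hvt).symm

end WeakTrajectories

section WeakSolvability

variable {ι κ E : Type*} [Fintype ι] [Fintype κ] [NormedAddCommGroup E] [NormedSpace ℝ E]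
  {Y : ι → E → E} {W : κ → E → E} {a : ℝ → κ → ℝ} {e : κ → ι → E → ℝ} {k : κ → ι → ℝ}
  {S Ω : Set E} {r u : ℝ} {x : E} {γ g : ℝ → E}

lemma IsWeakTrajectory.eqOn_of_locallyLipschitzOn {b : ℝ → ι → ℝ}
    (hg : IsWeakTrajectory (controlField Y b) Ω x u g)
    (hγ : IsTrajectory (controlField Y b) Ω x u γ) (hb : IsBoundedControl r b)
    (hY : ∀ l, LocallyLipschitzOn Ω (Y l)) : EqOn g γ (Icc 0 u) := by
  refine hg.eqOn hγ (fun t ht h hh => hh.eqOn_of_locallyLipschitzOn (hγ.restrict ht) hb hY) ?_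
  exact hb.intervalIntegrable_controlField (K := {x}) (fun _ => continuousOn_singleton _ _)
    continuousOn_const fun _ _ => rfl

namespace IsCombinationOn

lemma add_integral_mem {v : ℝ} (hY : ∀ l, LocallyLipschitzOn Ω (Y l))
    (he : IsCombinationOn Y W e k S) (hk : ∑ l, ∑ i, k i l ^ 2 ≤ r)
    (ha : IsBoundedControl 1 a) (hv : v ∈ Icc 0 u)
    (hγ : ∀ t ∈ Ico 0 v, IsTrajectory (controlField W a) Ω x t γ) (hγS : MapsTo γ (Ico 0 v) S)
    (hsolv : ∀ b, IsBoundedControl r b → ∃ g, IsWeakTrajectory (controlField Y b) Ω x u g) :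
    x + ∫ s in (0 : ℝ)..v, controlField W a s (γ s) ∈ Ω := by
  have hγc : ContinuousOn γ (Ico 0 v) := fun t ht => by
    obtain ⟨w, htw, hwv⟩ := exists_between ht.2
    exact ((hγ w ⟨ht.1.trans htw.le, hwv⟩).continuousOn t ⟨ht.1, htw.le⟩).mono_of_mem_nhdsWithin
      (mem_nhdsWithin.2 ⟨Iio w, isOpen_Iio, htw, fun s hs => ⟨hs.2.1, hs.1.le⟩⟩)
  have hb := he.isBoundedControl_feedback hk ha measurableSet_Ico hγc hγS
  obtain ⟨g, hg⟩ := hsolv _ hb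
  have hfield : ∀ s ∈ Ico 0 v, controlField Y (feedback e a γ (Ico 0 v)) s (γ s) =
      controlField W a s (γ s) := fun s hs => he.controlField_feedback hγS hs
  have heq : ∀ t ∈ Ico 0 v, g t = γ t := fun t ht => by
    refine (hg.restrict (ht.2.le.trans hv.2)).eqOn_of_locallyLipschitzOn ?_ hb hY ⟨ht.1, le_rfl⟩
    exact (hγ t ht).congr ht.1 (fun _ _ => rfl) fun s hs =>
      (hfield s ⟨hs.1.le, hs.2.trans ht.2⟩).symm
  have hgv := hg.eq_add_integral v hv
  rw [intervalIntegral.integral_congr_Ioo_of_le hv.1 fun s hs => by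
    rw [heq s ⟨hs.1.le, hs.2⟩, hfield s ⟨hs.1.le, hs.2⟩]] at hgv
  exact hgv ▸ hg.mapsTo hv

variable [FiniteDimensional ℝ E]

lemma mem_reachableSet_of_isWeakTrajectory (hΩ : IsOpen Ω)
    (hY : ∀ l, LocallyLipschitzOn Ω (Y l)) (hW : ∀ i, LocallyLipschitzOn Ω (W i))
    (he : IsCombinationOn Y W e k (reachableSet Y Ω r x)) (hk : ∑ l, ∑ i, k i l ^ 2 ≤ r)
    (ha : IsBoundedControl 1 a) (hx : x ∈ Ω)
    (hg : IsWeakTrajectory (controlField W a) Ω x 1 g) : g 1 ∈ reachableSet Y Ω r x := by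
  by_cases hinteg : IntervalIntegrable (fun s => controlField W a s (g s)) volume 0 1
  · exact he.mem_reachableSet hΩ hY hW hk ha ⟨zero_le_one, le_rfl⟩ (hg.isTrajectory hinteg)
  · rw [hg.eq_of_not_intervalIntegrable ⟨zero_le_one, le_rfl⟩ hinteg]
    exact mem_reachableSet_self ((Finset.sum_nonneg fun _ _ => Finset.sum_nonneg fun _ _ =>
      sq_nonneg _).trans hk) hx

/- A maximal trajectory of `W` which is not defined on all of `[0, 1]` follows a trajectory of `Y`,
so its limit lies in `Ω` as soon as it makes sense; by maximality it does not. -/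
lemma exists_isWeakTrajectory (hΩ : IsOpen Ω)
    (hY : ∀ l, LocallyLipschitzOn Ω (Y l)) (hW : ∀ i, LocallyLipschitzOn Ω (W i))
    (he : IsCombinationOn Y W e k (reachableSet Y Ω r x)) (hk : ∑ l, ∑ i, k i l ^ 2 ≤ r)
    (ha : IsBoundedControl 1 a) (hx : x ∈ Ω)
    (hsolv : ∀ b, IsBoundedControl r b → ∃ g, IsWeakTrajectory (controlField Y b) Ω x 1 g) :
    ∃ g, IsWeakTrajectory (controlField W a) Ω x 1 g := by
  rcases exists_isTrajectory_or_maximal hΩ ha hW hx zero_le_one with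
    ⟨γ, hγ⟩ | ⟨v, hv, ⟨γ, hγ⟩, hmax⟩
  · exact ⟨γ, hγ.isWeakTrajectory⟩
  refine ⟨_, isWeakTrajectory_of_not_intervalIntegrable hx hγ hv.1.le fun hinteg => hmax ?_⟩
  refine exists_isTrajectory_of_Ico hγ hv.1.le hinteg ?_
  refine he.add_integral_mem hY hk ha ⟨hv.1.le, hv.2⟩ hγ (fun t ht => ?_) hsolv
  exact he.mem_reachableSet hΩ hY hW hk ha ⟨ht.1, ht.2.le.trans hv.2⟩ (hγ t ht)

end IsCombinationOn

end WeakSolvability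

section ScaledFields

variable {n ν : ℕ} {ι κ : Type*} {X : ι → VF n} {d : ι → Deg ν} {Z : κ → VF n}
  {D : κ → Deg ν} {Ω U : Set (Euc n)} {δ ξ : Fin ν → ℝ} {x y : Euc n} {r ξ₁ : ℝ}

lemma dpow_nonneg (hδ : ∀ μ, 0 ≤ δ μ) (d : Deg ν) : 0 ≤ dpow δ d :=
  Finset.prod_nonneg fun μ _ => Real.rpow_nonneg (hδ μ) _

lemma dpow_le_one (hδ : δ ∈ unitCube ν) {d : Deg ν} (hd : ∀ μ, 0 ≤ d μ) : dpow δ d ≤ 1 :=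
  Finset.prod_le_one (fun μ _ => Real.rpow_nonneg (hδ μ).1 _)
    fun μ _ => Real.rpow_le_one (hδ μ).1 (hδ μ).2 (hd μ)

lemma dpow_vecConst_pos {c : ℝ} (hc : 0 < c) (d : Deg ν) : 0 < dpow (vecConst ν c) d :=
  Finset.prod_pos fun _ _ => Real.rpow_pos_of_pos hc _

lemma dpow_mul (hξ : ∀ μ, 0 ≤ ξ μ) (hδ : ∀ μ, 0 ≤ δ μ) (d : Deg ν) :
    dpow (fun μ => ξ μ * δ μ) d = dpow ξ d * dpow δ d := by
  simp only [dpow, ← Finset.prod_mul_distrib]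
  exact Finset.prod_congr rfl fun μ _ => Real.mul_rpow (hξ μ) (hδ μ)

lemma tendsto_dpow_vecConst {d : Deg ν} (hd : ∀ μ, 0 ≤ d μ) (hd₀ : d ≠ 0) :
    Tendsto (fun c => dpow (vecConst ν c) d) (𝓝[>] 0) (𝓝 0) := by
  obtain ⟨μ, hμ⟩ := Function.ne_iff.1 hd₀
  have hpos : 0 < ∑ μ, d μ := Finset.sum_pos' (fun μ _ => hd μ)
    ⟨μ, Finset.mem_univ _, (hd μ).lt_of_ne' hμ⟩
  have hlim := (Real.continuousAt_rpow_const 0 (∑ μ, d μ) (.inr hpos.le)).tendsto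
  rw [Real.zero_rpow hpos.ne'] at hlim
  refine (hlim.mono_left nhdsWithin_le_nhds).congr' ?_
  filter_upwards [self_mem_nhdsWithin] with c hc
  exact Real.rpow_sum_of_pos hc d Finset.univ

lemma exists_sum_sq_dpow_vecConst_mul_le [Fintype ι] [Fintype κ]
    (hD : ∀ i, (∀ μ, 0 ≤ D i μ) ∧ D i ≠ 0) (K : κ → ι → ℝ) (hr : 0 < r) :
    ∃ t > 0, ∑ l, ∑ i, (dpow (vecConst ν t) (D i) * K i l) ^ 2 ≤ r := by
  have hlim : Tendsto (fun t => ∑ l, ∑ i, (dpow (vecConst ν t) (D i) * K i l) ^ 2)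
      (𝓝[>] 0) (𝓝 0) := by
    simpa using tendsto_finsetSum Finset.univ fun l _ => tendsto_finsetSum Finset.univ fun i _ =>
      ((tendsto_dpow_vecConst (hD i).1 (hD i).2).mul_const (K i l)).pow 2
  obtain ⟨t, ht, ht₀⟩ := ((hlim.eventually_le_const hr).and self_mem_nhdsWithin).exists
  exact ⟨t, ht₀, ht⟩

/-- The vector fields `δ^{d_l} X_l`, whose trajectories define the Carnot–Carathéodory ball of
radius `δ`. -/
def scaledFields (X : ι → VF n) (d : ι → Deg ν) (δ : Fin ν → ℝ) (l : ι) : VF n :=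
  fun z => dpow δ (d l) • X l z

lemma locallyLipschitzOn_of_contDiffOn {V : VF n} (hΩ : IsOpen Ω) (hV : ContDiffOn ℝ 1 V Ω) :
    LocallyLipschitzOn Ω V := fun z hz => by
  obtain ⟨K, s, hs, hK⟩ := (hV.contDiffAt (hΩ.mem_nhds hz)).exists_lipschitzOnWith
  exact ⟨K, s, nhdsWithin_le_nhds hs, hK⟩

lemma locallyLipschitzOn_scaledFields (hX : ∀ l, LocallyLipschitzOn Ω (X l)) (l : ι) :
    LocallyLipschitzOn Ω (scaledFields X d δ l) := fun z hz => by
  obtain ⟨K, s, hs, hK⟩ := hX l hz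
  exact ⟨_, s, hs, (lipschitzWith_smul (dpow δ (d l))).comp_lipschitzOnWith hK⟩

variable [Fintype ι]

lemma isWeakTrajectory_scaledFields_iff {a : ℝ → ι → ℝ} {g : ℝ → Euc n} :
    IsWeakTrajectory (controlField (scaledFields X d δ) a) Ω x 1 g ↔
      (∀ u ∈ Icc (0 : ℝ) 1, g u ∈ Ω) ∧ SolvesODE X d δ a x g := by
  refine ⟨fun h => ⟨h.mapsTo, ?_, h.eq_add_integral⟩, fun h => ⟨h.1, h.2.2⟩⟩
  simpa using h.eq_add_integral 0 ⟨le_rfl, zero_le_one⟩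

lemma IsBoundedControl.isSubunit {b : ℝ → ι → ℝ} (hb : IsBoundedControl r b) (hr : r < 1) :
    IsSubunit b :=
  ⟨hb.measurable, r, hr, .of_forall hb.sum_sq_le⟩

lemma IsSubunit.exists_isBoundedControl {a : ℝ → ι → ℝ} (ha : IsSubunit a) :
    ∃ b, IsBoundedControl 1 b ∧ ∀ᵐ s, s ∈ Icc (0 : ℝ) 1 → a s = b s := by
  obtain ⟨hm, c, hc, hac⟩ := ha
  have hset : MeasurableSet {s | ∑ l, a s l ^ 2 ≤ 1} :=
    measurableSet_le (Finset.measurable_fun_sum _ fun l _ => (hm l).pow_const 2) measurable_const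
  refine ⟨fun s => if ∑ l, a s l ^ 2 ≤ 1 then a s else 0, ⟨fun l => ?_, fun s => ?_⟩, ?_⟩
  · simpa only [ite_apply] using Measurable.ite hset (hm l) measurable_const
  · split_ifs with hs
    · exact hs
    · simp
  · filter_upwards [(ae_restrict_iff' measurableSet_Icc).1 hac] with s hs hs₀₁
    rw [if_pos ((hs hs₀₁).trans hc.le)]

lemma exists_isWeakTrajectory_of_mem_ccBall (hy : y ∈ CCBall X d Ω x δ) :
    ∃ b g, IsBoundedControl 1 b ∧
      IsWeakTrajectory (controlField (scaledFields X d δ) b) Ω x 1 g ∧ g 1 = y := by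
  obtain ⟨g, a, ha, hgΩ, hg, hgy⟩ := hy
  obtain ⟨b, hb, hab⟩ := ha.exists_isBoundedControl
  refine ⟨b, g, hb, (isWeakTrajectory_scaledFields_iff.2 ⟨hgΩ, hg⟩).congr_ae ?_, hgy⟩
  filter_upwards [hab] with s hs hs₀₁
  simp only [funext_iff, controlField, hs hs₀₁, implies_true]

lemma reachableSet_scaledFields_subset_ccBall (hr : r < 1) :
    reachableSet (scaledFields X d δ) Ω r x ⊆ CCBall X d Ω x δ := by
  rintro z ⟨b, g, hb, hg, hz⟩
  obtain ⟨hgΩ, hsolves⟩ := isWeakTrajectory_scaledFields_iff.1 hg.isWeakTrajectory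
  exact ⟨g, b, hb.isSubunit hr, hgΩ, hsolves, hz⟩

lemma satC_of_isWeakTrajectory (h : ∀ b, IsBoundedControl 1 b →
    ∃ g, IsWeakTrajectory (controlField (scaledFields X d δ) b) Ω x 1 g) : SatC X d x δ Ω := by
  intro a ha
  obtain ⟨b, hb, hab⟩ := ha.exists_isBoundedControl
  obtain ⟨g, hg⟩ := h b hb
  refine ⟨g, isWeakTrajectory_scaledFields_iff.1 (hg.congr_ae ?_)⟩
  filter_upwards [hab] with s hs hs₀₁
  simp only [funext_iff, controlField, hs hs₀₁, implies_true]

lemma SatC.exists_isWeakTrajectory (h : SatC X d x δ Ω) (hr : r < 1) {b : ℝ → ι → ℝ}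
    (hb : IsBoundedControl r b) :
    ∃ g, IsWeakTrajectory (controlField (scaledFields X d δ) b) Ω x 1 g := by
  obtain ⟨g, hg⟩ := h b (hb.isSubunit hr)
  exact ⟨g, isWeakTrajectory_scaledFields_iff.2 hg⟩

lemma SatC.mul_of_mem_unitCube (h : SatC X d x ξ Ω) (hd : ∀ l μ, 0 ≤ d l μ) (hξ : ∀ μ, 0 ≤ ξ μ)
    (hδ : δ ∈ unitCube ν) : SatC X d x (fun μ => ξ μ * δ μ) Ω := by
  rintro a ⟨hm, c, hc, hac⟩
  have hδ₀ : ∀ μ, 0 ≤ δ μ := fun μ => (hδ μ).1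
  have hsub : IsSubunit fun s l => a s l * dpow δ (d l) := by
    refine ⟨fun l => (hm l).mul_const _, c, hc, ?_⟩
    filter_upwards [hac] with s hs
    refine (Finset.sum_le_sum fun l _ => ?_).trans hs
    rw [mul_pow]
    exact mul_le_of_le_one_right (sq_nonneg _)
      (pow_le_one₀ (dpow_nonneg hδ₀ _) (dpow_le_one hδ (hd l)))
  obtain ⟨g, hgΩ, hg₀, hg⟩ := h _ hsub
  refine ⟨g, hgΩ, hg₀, fun u hu => ?_⟩
  simpa only [dpow_mul hξ hδ₀, smul_smul, mul_assoc, mul_comm (dpow δ _)] using hg u hu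

lemma exists_isCombinationOn_of_controlsOn (hξ₁ : 0 < ξ₁)
    (hZ : ∀ i, ControlsOn X d Ω U ξ₁ (Z i) (D i)) :
    ∃ K : κ → ι → ℝ, ∀ x ∈ U, ∀ δ ∈ unitCube ν, ∀ t > 0, ∃ e,
      IsCombinationOn (scaledFields X d fun μ => ξ₁ * δ μ) (scaledFields Z D fun μ => t * δ μ) e
        (fun i l => dpow (vecConst ν t) (D i) * K i l) (CCBall X d Ω x fun μ => ξ₁ * δ μ) := by
  choose c hc_eq hc_cont hc_bdd using fun i => (hZ i).2
  choose C hC using fun i => hc_bdd i 0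
  refine ⟨fun i l => (dpow (vecConst ν ξ₁) (d l))⁻¹ * C i, fun x hx δ hδ t ht =>
    ⟨fun i l z => dpow (vecConst ν t) (D i) * ((dpow (vecConst ν ξ₁) (d l))⁻¹ * c i x δ l z),
      fun i z hz => ?_, fun i l => ?_, fun i l z hz => ?_⟩⟩
  · have hscale : ∀ {s : ℝ}, 0 < s → ∀ d' : Deg ν,
        dpow (fun μ => s * δ μ) d' = dpow (vecConst ν s) d' * dpow δ d' := fun hs d' =>
      dpow_mul (fun _ => hs.le) (fun μ => (hδ μ).1) d'
    simp only [scaledFields, hscale ht, hscale hξ₁, mul_smul, hc_eq i x hx δ hδ z hz,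
      Finset.smul_sum]
    refine Finset.sum_congr rfl fun l _ => ?_
    rw [smul_comm (c i x δ l z) (dpow (vecConst ν ξ₁) (d l)),
      inv_smul_smul₀ (dpow_vecConst_pos hξ₁ (d l)).ne']
  · exact ((hc_cont i x hx δ hδ l []).const_mul _).const_mul _
  · rw [abs_mul, abs_mul, abs_of_pos (dpow_vecConst_pos ht _),
      abs_of_pos (inv_pos.2 (dpow_vecConst_pos hξ₁ _))]
    have hbound : |c i x δ l z| ≤ C i := hC i x hx δ hδ l [] le_rfl z hz
    exact mul_le_mul_of_nonneg_left (mul_le_mul_of_nonneg_left hbound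
      (inv_pos.2 (dpow_vecConst_pos hξ₁ _)).le) (dpow_vecConst_pos ht _).le

end ScaledFields

end Zhang

theorem statement_8_general {ν n : ℕ} {ι κ : Type*} [Fintype ι] [Fintype κ]
    {Ω U : Set (Euc n)} {X : ι → VF n} {d : ι → Deg ν} {Z : κ → VF n} {D : κ → Deg ν} {ξ₁ : ℝ}
    (hΩ : IsOpen Ω) (hX : ∀ l, LocallyLipschitzOn Ω (X l)) (hZ : ∀ i, LocallyLipschitzOn Ω (Z i))
    (hd : ∀ l μ, 0 ≤ d l μ) (hD : ∀ i, (∀ μ, 0 ≤ D i μ) ∧ D i ≠ 0) (hξ₁ : 0 < ξ₁) (hUΩ : U ⊆ Ω)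
    (hC : ∀ x ∈ U, SatC X d x (vecConst ν ξ₁) Ω)
    (hZctrl : ∀ i, ControlsOn X d Ω U ξ₁ (Z i) (D i)) :
    ∃ c : ℝ, 0 < c ∧
      (∀ x ∈ U, ∀ δ ∈ unitCube ν,
        CCBall Z D Ω x (fun μ => c * ξ₁ * δ μ) ⊆ CCBall X d Ω x (fun μ => ξ₁ * δ μ)) ∧
      ∀ x ∈ U, SatC Z D x (vecConst ν (c * ξ₁)) Ω := by
  obtain ⟨K, hK⟩ := exists_isCombinationOn_of_controlsOn hξ₁ hZctrl
  obtain ⟨t, ht, hsum⟩ := exists_sum_sq_dpow_vecConst_mul_le hD K one_half_pos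
  have hball : ∀ (x : Euc n) (δ : Fin ν → ℝ),
      reachableSet (scaledFields X d δ) Ω (1 / 2) x ⊆ CCBall X d Ω x δ := fun x δ =>
    reachableSet_scaledFields_subset_ccBall one_half_lt_one
  have hXδ := fun δ => locallyLipschitzOn_scaledFields (d := d) (δ := δ) hX
  have hZδ := fun δ => locallyLipschitzOn_scaledFields (d := D) (δ := δ) hZ
  refine ⟨t / ξ₁, div_pos ht hξ₁, ?_⟩
  rw [div_mul_cancel₀ t hξ₁.ne']
  refine ⟨fun x hx δ hδ y hy => ?_, fun x hx => satC_of_isWeakTrajectory fun a ha => ?_⟩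
  · obtain ⟨e, he⟩ := hK x hx δ hδ t ht
    obtain ⟨a, g, ha, hg, rfl⟩ := exists_isWeakTrajectory_of_mem_ccBall hy
    exact hball x _ ((he.mono (hball x _)).mem_reachableSet_of_isWeakTrajectory hΩ (hXδ _) (hZδ _)
      hsum ha (hUΩ hx) hg)
  · have h₁ : (1 : Fin ν → ℝ) ∈ unitCube ν := fun μ => ⟨zero_le_one, le_rfl⟩
    obtain ⟨e, he⟩ := hK x hx 1 h₁ t ht
    have hvec : vecConst ν t = fun μ => t * (1 : Fin ν → ℝ) μ := funext fun _ => (mul_one t).symm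
    have hsolv := (hC x hx).mul_of_mem_unitCube hd (fun _ => hξ₁.le) h₁
    rw [hvec]
    exact (he.mono (hball x _)).exists_isWeakTrajectory hΩ (hXδ _) (hZδ _) hsum ha (hUΩ hx)
      fun b hb => hsolv.exists_isWeakTrajectory one_half_lt_one hb

/-- Lemma 6.4: containment of Carnot–Carathéodory balls under control. -/
theorem statement_8 {ν n q Q : ℕ}
    (Ω : Set (Euc n)) (hΩ : IsOpen Ω) (h0 : (0 : Euc n) ∈ Ω)
    (X : Fin q → VF n) (d : Fin q → Deg ν) (Z : Fin Q → VF n) (D : Fin Q → Deg ν)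
    (hXs : ∀ l, ContDiffOn ℝ (⊤ : ℕ∞) (X l) Ω) (hZs : ∀ i, ContDiffOn ℝ (⊤ : ℕ∞) (Z i) Ω)
    (hd : ∀ l, (∀ μ, 0 ≤ d l μ) ∧ d l ≠ 0) (hD : ∀ i, (∀ μ, 0 ≤ D i μ) ∧ D i ≠ 0)
    (ξ₁ : ℝ) (hξ₁ : 0 < ξ₁) (U : Set (Euc n)) (hU : IsOpen U) (h0U : (0 : Euc n) ∈ U)
    (hUΩ : U ⊆ Ω)
    (hC : ∀ x ∈ U, SatC X d x (vecConst ν ξ₁) Ω)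
    (hbrackets : ∀ i j, ControlsOn X d Ω U ξ₁ (lieBracket (X i) (X j)) (d i + d j))
    (hZctrl : ∀ i, ControlsOn X d Ω U ξ₁ (Z i) (D i)) :
    ∃ c : ℝ, 0 < c ∧
      (∀ x ∈ U, ∀ δ ∈ unitCube ν,
        CCBall Z D Ω x (fun μ => c * ξ₁ * δ μ) ⊆ CCBall X d Ω x (fun μ => ξ₁ * δ μ)) ∧
      ∀ x ∈ U, SatC Z D x (vecConst ν (c * ξ₁)) Ω := by
  exact statement_8_general hΩ
    (fun l => locallyLipschitzOn_of_contDiffOn hΩ ((hXs l).of_le (by exact_mod_cast le_top)))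
    (fun i => locallyLipschitzOn_of_contDiffOn hΩ ((hZs i).of_le (by exact_mod_cast le_top)))
    (fun l => (hd l).1) hD hξ₁ hUΩ hC hZctrl
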